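/- arXiv:1802.00299 — 2 statements merged into one kernel-verified Lean document; each statement's English description precedes it below -/
import Mathlib

section
/- Let D be a central division algebra of degree n = n₁n₂ over a field K with gcd(n₁, n₂) = 1, and suppose D = D₁ ⊗_K D₂ where Dᵢ is a central division K-algebra of degree nᵢ. If D' is a central division K-algebra of degree n having the same maximal subfields as D, then D' ≅ D'₁ ⊗_K D'₂ where each D'ᵢ is a central division K-algebra of degree nᵢ having the same maximal subfields as Dᵢ. -/
open TensorProduct
set_option maxHeartbeats 1000000

/-- Two `K`-algebras (of degree `n`, i.e. dimension `n²`) have the same maximal subfields: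
a field extension `P/K` of degree `n` embeds `K`-linearly into `A` iff it embeds into `B`. -/
def SameMaxSubfields (K : Type) [Field K] (n : ℕ) (A B : Type) [Ring A] [Ring B]
    [Algebra K A] [Algebra K B] : Prop :=
  ∀ (P : Type) [Field P] [Algebra K P], Module.finrank K P = n →
    (Nonempty (P →ₐ[K] A) ↔ Nonempty (P →ₐ[K] B))

/-- The subalgebra `A` is a division algebra: every nonzero element is two-sided invertible. -/
def IsDivisionSubalgebra {K B : Type} [Field K] [Ring B] [Algebra K B]
    (A : Subalgebra K B) : Prop :=
  ∀ x : ↥A, x ≠ 0 → ∃ y : ↥A, x * y = 1 ∧ y * x = 1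

/-!
Let `P ⊆ D₁` and `Q ⊆ D₂` be maximal subfields. Their compositum `P ⊗ Q` is a field of degree `n`
inside `D`, hence inside `D'`, so `P` and `Q` embed in `D'`. Extending scalars to `P` therefore
leaves `D'` with an index dividing `n₂`, and extending to `Q` with an index dividing `n₁`. Since
the period of a Brauer class divides its index, Bézout's identity writes `[D'] = y * z` with `y` a
multiple of `n₂` split by `P` and `z` a multiple of `n₁` split by `Q`; thus `ind y ∣ n₁` and
`ind z ∣ n₂`, and both are equalities because `ind (y * z) = n₁ * n₂`.

A field `P` of degree `n₁` inside `D'` leaves `D'`, hence also `D'₁`, with an index over `P` that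
divides a power of `n₂`. That index also divides `n₁`, so `P` splits `D'₁` and therefore embeds in
it. Thus a tensor decomposition into coprime degrees determines the maximal subfields of its
factors.

That the period divides the index `n` is proved without cohomology. Over a splitting field, the
determinants formed by taking the columns of an `n × n` matrix from `n` elements of `D` span a space
of dimension at most `n ^ n` that is stable under the `n`-fold tensor power of `D`. So are the
`K`-valued forms in this space, and they include the polarized reduced norm, which is not zero. As
this tensor power has dimension `(n ^ n) ^ 2`, a nonzero module of dimension at most `n ^ n` forces
it to be split.
-/

universe u

namespace CentralSimple

open Module MulOpposite

/-! ### Tensor products of central simple algebras -/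

section Bimodule

variable {K A : Type*} [Field K] [Ring A] [Algebra K A]

attribute [local instance] instModuleTensorProductMop

lemma tmul_op_smul (a b c : A) : (a ⊗ₜ op b : A ⊗[K] Aᵐᵒᵖ) • c = a * c * b :=
  AlgHom.mulLeftRight_apply K A a (op b) c

instance isSimpleModule_tensor_op [IsSimpleRing A] : IsSimpleModule (A ⊗[K] Aᵐᵒᵖ) A := by
  refine isSimpleModule_iff_toSpanSingleton_surjective.mpr ⟨inferInstance, fun a ha b ↦ ?_⟩
  let N := (A ⊗[K] Aᵐᵒᵖ) ∙ a
  let I : TwoSidedIdeal A := .mk' N N.zero_mem N.add_mem N.neg_mem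
    (fun {x y} hy ↦ by
      simpa only [tmul_op_smul, mul_one, SetLike.mem_coe] using N.smul_mem (x ⊗ₜ op 1) hy)
    (fun {x y} hx ↦ by
      simpa only [tmul_op_smul, one_mul, SetLike.mem_coe] using N.smul_mem (1 ⊗ₜ op y) hx)
  have ha_mem : a ∈ I := (TwoSidedIdeal.mem_mk' ..).mpr (Submodule.mem_span_singleton_self a)
  have hb_mem : b ∈ I := by
    simpa using I.mul_mem_left b 1 (IsSimpleRing.one_mem_of_ne_zero_mem I ha ha_mem)
  exact Submodule.mem_span_singleton.mp ((TwoSidedIdeal.mem_mk' ..).mp hb_mem)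

lemma exists_smul_eq_of_end_tensor_op [Algebra.IsCentral K A] (g : End (A ⊗[K] Aᵐᵒᵖ) A) :
    ∃ k : K, ∀ a, g a = k • a := by
  have left (a : A) : g a = a * g 1 := by
    simpa only [tmul_op_smul, mul_one] using map_smul g (a ⊗ₜ op 1) 1
  have right (a : A) : g a = g 1 * a := by
    simpa only [tmul_op_smul, one_mul, mul_one] using map_smul g (1 ⊗ₜ op a) 1
  obtain ⟨k, hk⟩ := (Algebra.IsCentral.mem_center_iff K).mp
    (Subalgebra.mem_center_iff.mpr fun a ↦ (left a).symm.trans (right a))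
  exact ⟨k, fun a ↦ by rw [right, hk, Algebra.smul_def]⟩

lemma exists_mulLeftRight_eqOn [Algebra.IsCentral K A] [IsSimpleRing A] (f : End K A)
    (s : Finset A) : ∃ t : A ⊗[K] Aᵐᵒᵖ, ∀ a ∈ s, AlgHom.mulLeftRight K A t a = f a := by
  let f' : End (End (A ⊗[K] Aᵐᵒᵖ) A) A :=
    { f with
      map_smul' := fun g a ↦ by
        obtain ⟨k, hk⟩ := exists_smul_eq_of_end_tensor_op g
        simp [hk] }
  obtain ⟨t, ht⟩ := jacobson_density f' s
  exact ⟨t, fun a ha ↦ (ht a ha).symm⟩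

end Bimodule

section Tensor

variable {K A B : Type*} [Field K] [Ring A] [Algebra K A] [Ring B] [Algebra K B]

lemma rTensor_mulLeftRight_mem (I : TwoSidedIdeal (A ⊗[K] B)) {x : A ⊗[K] B} (hx : x ∈ I)
    (t : A ⊗[K] Aᵐᵒᵖ) : (AlgHom.mulLeftRight K A t).rTensor B x ∈ I := by
  induction t with
  | zero => simp
  | add t u ht hu => simpa using I.add_mem ht hu
  | tmul a b =>
    have h : (AlgHom.mulLeftRight K A (a ⊗ₜ b)).rTensor B =
        .mulLeftRight K (a ⊗ₜ[K] (1 : B), b.unop ⊗ₜ[K] (1 : B)) := by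
      ext c d; simp
    rw [h, LinearMap.mulLeftRight_apply]
    exact I.mul_mem_right _ _ (I.mul_mem_left _ _ hx)

lemma exists_one_tmul_mem [Algebra.IsCentral K A] [IsSimpleRing A] {I : TwoSidedIdeal (A ⊗[K] B)}
    (hI : I ≠ ⊥) : ∃ b : B, b ≠ 0 ∧ (1 : A) ⊗ₜ[K] b ∈ I := by
  classical
  obtain ⟨x, hxI, hx0⟩ := SetLike.exists_of_lt (bot_lt_iff_ne_bot.mpr hI)
  let b := Free.chooseBasis K A
  have hcoeff : TensorProduct.equivFinsuppOfBasisLeft (N := B) b x ≠ 0 := by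
    simpa using hx0
  obtain ⟨i, hi⟩ := Finsupp.ne_iff.mp hcoeff
  let f : End K A := (b.coord i).smulRight 1
  have hf : f.rTensor B x = 1 ⊗ₜ TensorProduct.equivFinsuppOfBasisLeft b x i := by
    generalize x = y
    induction y with
    | zero => simp
    | add y z hy hz => simp [hy, hz, TensorProduct.tmul_add]
    | tmul c d => simp [f, TensorProduct.smul_tmul]
  refine ⟨_, hi, hf ▸ ?_⟩
  obtain ⟨s, hs⟩ := TensorProduct.exists_finset x
  obtain ⟨t, ht⟩ := exists_mulLeftRight_eqOn f (s.image Prod.fst)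
  have : f.rTensor B x = (AlgHom.mulLeftRight K A t).rTensor B x := by
    simp only [hs, map_sum, LinearMap.rTensor_tmul]
    exact Finset.sum_congr rfl fun p hp ↦ by rw [ht _ (Finset.mem_image_of_mem _ hp)]
  exact this ▸ rTensor_mulLeftRight_mem I hxI t

instance isSimpleRing_tensor [Algebra.IsCentral K A] [IsSimpleRing A] [IsSimpleRing B] :
    IsSimpleRing (A ⊗[K] B) := by
  refine .of_eq_bot_or_eq_top fun I ↦ or_iff_not_imp_left.mpr fun hI ↦ ?_
  obtain ⟨b, hb, hbI⟩ := exists_one_tmul_mem hI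
  let J : TwoSidedIdeal B := I.comap (Algebra.TensorProduct.includeRight : B →ₐ[K] A ⊗[K] B)
  have one_mem : (1 : B) ∈ J :=
    IsSimpleRing.one_mem_of_ne_zero_mem J hb ((TwoSidedIdeal.mem_comap _).mpr hbI)
  exact I.one_mem_iff.mp ((TwoSidedIdeal.mem_comap _).mp one_mem)

instance isSimpleRing_baseChange (P : Type*) [Field P] [Algebra K P] [Algebra.IsCentral K A]
    [IsSimpleRing A] : IsSimpleRing (P ⊗[K] A) :=
  .of_ringEquiv (Algebra.TensorProduct.comm K A P).toRingEquiv inferInstance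

lemma exists_eq_tmul_one_of_commute [Algebra.IsCentral K B] {x : A ⊗[K] B}
    (h : ∀ b : B, (1 ⊗ₜ b) * x = x * (1 ⊗ₜ b)) : ∃ a : A, x = a ⊗ₜ 1 := by
  have hx : x ∈ Subalgebra.centralizer K
      (Algebra.TensorProduct.includeRight : B →ₐ[K] A ⊗[K] B).range := by
    rintro _ ⟨b, rfl⟩
    exact h b
  rw [Subalgebra.centralizer_range_includeRight_eq_center_tensorProduct] at hx
  obtain ⟨y, rfl⟩ := hx
  clear h
  induction y with
  | zero => exact ⟨0, by simp⟩
  | add y z hy hz =>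
    obtain ⟨a, ha⟩ := hy
    obtain ⟨c, hc⟩ := hz
    exact ⟨a + c, by rw [map_add, ha, hc, TensorProduct.add_tmul]⟩
  | tmul a b =>
    obtain ⟨k, hk⟩ := (Algebra.IsCentral.mem_center_iff K).mp b.2
    exact ⟨k • a, by simp [hk, TensorProduct.smul_tmul, Algebra.algebraMap_eq_smul_one]⟩

instance isCentral_tensor [Nontrivial B] [Algebra.IsCentral K A] [Algebra.IsCentral K B] :
    Algebra.IsCentral K (A ⊗[K] B) where
  out x hx := by
    obtain ⟨a, rfl⟩ := exists_eq_tmul_one_of_commute fun b ↦ Subalgebra.mem_center_iff.mp hx _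
    have ha : a ∈ Subalgebra.center K A := Subalgebra.mem_center_iff.mpr fun c ↦
      Algebra.TensorProduct.includeLeft_injective (S := K) (FaithfulSMul.algebraMap_injective K B)
        (by simpa using Subalgebra.mem_center_iff.mp hx (c ⊗ₜ 1))
    obtain ⟨k, rfl⟩ := (Algebra.IsCentral.mem_center_iff K).mp ha
    exact ⟨k, rfl⟩

instance isCentral_baseChange (P : Type*) [Field P] [Algebra K P] [Algebra.IsCentral K A] :
    Algebra.IsCentral P (P ⊗[K] A) where
  out x hx := by
    obtain ⟨p, rfl⟩ := exists_eq_tmul_one_of_commute fun b ↦ Subalgebra.mem_center_iff.mp hx _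
    exact ⟨p, rfl⟩

end Tensor

/-! ### Simple modules and matrix algebras -/

section SimpleModule

variable {K R S T : Type*} [Field K] [Ring R] [Algebra K R] [IsSimpleRing R] [IsArtinianRing R]
  [AddCommGroup S] [Module R S] [IsSimpleModule R S] [AddCommGroup T] [Module R T]

variable (R S T) in
lemma nonempty_linearEquiv_of_isSimpleModule [IsSimpleModule R T] : Nonempty (S ≃ₗ[R] T) := by
  obtain ⟨I, ⟨e⟩⟩ := IsSemisimpleRing.exists_linearEquiv_ideal_of_isSimpleModule R S
  obtain ⟨J, ⟨f⟩⟩ := IsSemisimpleRing.exists_linearEquiv_ideal_of_isSimpleModule R T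
  have := IsSimpleModule.congr e.symm
  have := IsSimpleModule.congr f.symm
  obtain ⟨g⟩ := IsSimpleRing.isIsotypic R R J I
  exact ⟨e.trans (g.trans f.symm)⟩

lemma finrank_dvd_finrank_of_isSimpleModule [Module K S] [IsScalarTower K R S]
    [FiniteDimensional K S] [Module K T] [IsScalarTower K R T] [Module.Finite R T] :
    finrank K S ∣ finrank K T := by
  nontriviality T
  obtain ⟨n, -, N, _, ⟨e⟩⟩ := (IsSimpleRing.isIsotypic R T).linearEquiv_fun
  obtain ⟨f⟩ := nonempty_linearEquiv_of_isSimpleModule R N S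
  rw [((e.trans (.piCongrRight fun _ ↦ f)).restrictScalars K).finrank_eq, finrank_pi_fintype]
  simp

end SimpleModule

section Wedderburn

variable {K E F V : Type*} [Field K] [DivisionRing E] [Algebra K E] [DivisionRing F] [Algebra K F]

instance isSimpleModule_matrix_pi {r : ℕ} [NeZero r] :
    IsSimpleModule (Matrix (Fin r) (Fin r) E) (Fin r → E) := by
  refine isSimpleModule_iff_toSpanSingleton_surjective.mpr ⟨inferInstance, fun v hv w ↦ ?_⟩
  obtain ⟨j, hj⟩ := Function.ne_iff.mp hv
  have hj' : v j ≠ 0 := hj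
  refine ⟨.of fun i k ↦ if k = j then w i * (v j)⁻¹ else 0, ?_⟩
  ext i
  simp [LinearMap.toSpanSingleton_apply, Matrix.mulVec, dotProduct, hj']

lemma mul_finrank_dvd_of_matrix_algHom [AddCommGroup V] [Module K V] [FiniteDimensional K E]
    [FiniteDimensional K V] {r : ℕ} [NeZero r]
    (φ : Matrix (Fin r) (Fin r) E →ₐ[K] End K V) : r * finrank K E ∣ finrank K V := by
  let R := Matrix (Fin r) (Fin r) E
  have : IsArtinianRing R := .of_finite K R
  let : Module R V := .compHom _ φ.toRingHom
  have : IsScalarTower K R V := ⟨fun k x v ↦ congr($(map_smul φ k x) v)⟩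
  have : Module.Finite R V := .of_restrictScalars_finite K R V
  simpa [finrank_pi_fintype] using
    finrank_dvd_finrank_of_isSimpleModule (K := K) (R := R) (S := Fin r → E) (T := V)

lemma finrank_eq_of_matrix_algEquiv [FiniteDimensional K E] [FiniteDimensional K F] {n m : ℕ}
    [NeZero n] [NeZero m] (e : Matrix (Fin n) (Fin n) E ≃ₐ[K] Matrix (Fin m) (Fin m) F) :
    n = m ∧ finrank K E = finrank K F := by
  have hdvd := mul_finrank_dvd_of_matrix_algHom
    ((Algebra.lsmul K K (Fin m → F) : Matrix (Fin m) (Fin m) F →ₐ[K] _).comp e.toAlgHom)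
  have hdvd' := mul_finrank_dvd_of_matrix_algHom
    ((Algebra.lsmul K K (Fin n → E) : Matrix (Fin n) (Fin n) E →ₐ[K] _).comp e.symm.toAlgHom)
  simp only [finrank_pi_fintype, Finset.sum_const, Finset.card_univ, Fintype.card_fin,
    smul_eq_mul] at hdvd hdvd'
  have hmul : n * finrank K E = m * finrank K F := hdvd.antisymm hdvd'
  have hdim := e.toLinearEquiv.finrank_eq
  simp only [finrank_matrix, Fintype.card_fin, mul_assoc, hmul] at hdim
  have hnm : n = m := Nat.eq_of_mul_eq_mul_right (Nat.mul_pos (NeZero.pos m) finrank_pos) hdim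
  exact ⟨hnm, Nat.eq_of_mul_eq_mul_left (NeZero.pos m) (hnm ▸ hmul)⟩

lemma isCentral_of_matrix {A : Type*} [Ring A] [Algebra K A] (r : ℕ) [NeZero r]
    [Algebra.IsCentral K (Matrix (Fin r) (Fin r) A)] : Algebra.IsCentral K A where
  out a ha := by
    have hz : Matrix.scalar (Fin r) a ∈ Subalgebra.center K (Matrix (Fin r) (Fin r) A) :=
      Subalgebra.mem_center_iff.mpr fun M ↦ (Matrix.scalar_commute a
        (fun b ↦ (Subalgebra.mem_center_iff.mp ha b).symm) M).eq.symm
    obtain ⟨k, hk⟩ := (Algebra.IsCentral.mem_center_iff K).mp hz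
    exact ⟨k, by simpa [Matrix.algebraMap_matrix_apply] using congr($hk.symm 0 0)⟩

lemma exists_algEquiv_matrix (K : Type*) (A : Type u) [Field K] [Ring A] [Algebra K A]
    [Algebra.IsCentral K A] [IsSimpleRing A] [FiniteDimensional K A] :
    ∃ (r : ℕ) (_ : NeZero r) (E : Type u) (_ : DivisionRing E) (_ : Algebra K E)
      (_ : Algebra.IsCentral K E) (_ : FiniteDimensional K E),
      Nonempty (A ≃ₐ[K] Matrix (Fin r) (Fin r) E) := by
  have := IsArtinianRing.of_finite K A
  obtain ⟨r, hr, E, _, _, _, ⟨e⟩⟩ :=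
    IsSimpleRing.exists_algEquiv_matrix_divisionRing_finite (R₀ := K) (R := A)
  have := Algebra.IsCentral.of_algEquiv K _ _ e
  have : Algebra.IsCentral K E := isCentral_of_matrix r
  exact ⟨r, hr, E, _, _, inferInstance, inferInstance, ⟨e⟩⟩

lemma exists_algebraicClosure_tensor_algEquiv (K A : Type*) [Field K] [Ring A] [Algebra K A]
    [Algebra.IsCentral K A] [IsSimpleRing A] [FiniteDimensional K A] :
    ∃ n : ℕ, n ≠ 0 ∧ finrank K A = n ^ 2 ∧
      Nonempty (AlgebraicClosure K ⊗[K] A ≃ₐ[AlgebraicClosure K]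
        Matrix (Fin n) (Fin n) (AlgebraicClosure K)) := by
  obtain ⟨n, hn, ⟨e⟩⟩ := IsSimpleRing.exists_algEquiv_matrix_of_isAlgClosed
    (AlgebraicClosure K) (AlgebraicClosure K ⊗[K] A)
  refine ⟨n, hn.out, ?_, ⟨e⟩⟩
  rw [← finrank_baseChange (R := AlgebraicClosure K), e.toLinearEquiv.finrank_eq]
  simp [finrank_matrix, sq]

end Wedderburn

/-! ### The Brauer group -/

/-- The Brauer group of `K`, with representatives in the universe of `K`. Mathlib's `BrauerGroup`
is only the set of classes; this synonym carries the group structure induced by `⊗`. -/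
def Br (K : Type u) [Field K] : Type (u + 1) := BrauerGroup.{u, u} K

namespace Br

variable {K : Type u} [Field K]

/-- The Brauer class of a central simple algebra. -/
def mk (K A : Type u) [Field K] [Ring A] [Algebra K A] [Algebra.IsCentral K A] [IsSimpleRing A]
    [FiniteDimensional K A] : Br K :=
  Quotient.mk (Brauer.CSA_Setoid K) (.mk (.of K A))

variable {A B : Type u} [Ring A] [Algebra K A] [Algebra.IsCentral K A] [IsSimpleRing A]
  [FiniteDimensional K A] [Ring B] [Algebra K B] [Algebra.IsCentral K B] [IsSimpleRing B]
  [FiniteDimensional K B]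

@[elab_as_elim]
lemma ind {p : Br K → Prop} (h : ∀ (A : Type u) [Ring A] [Algebra K A] [Algebra.IsCentral K A]
    [IsSimpleRing A] [FiniteDimensional K A], p (mk K A)) (x : Br K) : p x :=
  Quotient.inductionOn x fun A ↦ h A

lemma mk_eq_mk_iff : mk K A = mk K B ↔ ∃ n m : ℕ, n ≠ 0 ∧ m ≠ 0 ∧
    Nonempty (Matrix (Fin n) (Fin n) A ≃ₐ[K] Matrix (Fin m) (Fin m) B) :=
  Quotient.eq (r := Brauer.CSA_Setoid K)

lemma mk_congr (e : A ≃ₐ[K] B) : mk K A = mk K B :=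
  mk_eq_mk_iff.mpr ⟨1, 1, one_ne_zero, one_ne_zero, ⟨e.mapMatrix⟩⟩

lemma mk_eq_of_algEquiv_matrix {r : ℕ} [NeZero r] (e : A ≃ₐ[K] Matrix (Fin r) (Fin r) B) :
    mk K A = mk K B :=
  mk_eq_mk_iff.mpr ⟨1, r, one_ne_zero, NeZero.ne r, ⟨e.mapMatrix.trans <|
    (Matrix.compAlgEquiv _ _ _ _).trans <|
    Matrix.reindexAlgEquiv K B (Equiv.uniqueProd (Fin r) (Fin 1))⟩⟩

noncomputable instance : Mul (Br K) where
  mul := Quotient.map₂ (fun A B ↦ .mk (.of K (A ⊗[K] B))) <| by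
    rintro A A' ⟨n, m, hn, hm, ⟨e⟩⟩ B B' ⟨p, q, hp, hq, ⟨f⟩⟩
    exact ⟨n * p, m * q, mul_ne_zero hn hp, mul_ne_zero hm hq,
      ⟨(Matrix.reindexAlgEquiv K _ finProdFinEquiv).symm.trans <|
      (Matrix.kroneckerTMulAlgEquiv (Fin n) (Fin p) K K A B).symm.trans <|
      (Algebra.TensorProduct.congr e f).trans <|
      (Matrix.kroneckerTMulAlgEquiv (Fin m) (Fin q) K K A' B').trans <|
      Matrix.reindexAlgEquiv K _ finProdFinEquiv⟩⟩

noncomputable instance : One (Br K) where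
  one := mk K K

noncomputable instance : Inv (Br K) where
  inv := Quotient.map (fun A ↦ .mk (.of K Aᵐᵒᵖ)) <| by
    rintro A A' ⟨n, m, hn, hm, ⟨e⟩⟩
    exact ⟨n, m, hn, hm, ⟨AlgEquiv.mopMatrix.trans <| (AlgEquiv.op e).trans
      AlgEquiv.mopMatrix.symm⟩⟩

lemma mk_tensor : mk K (A ⊗[K] B) = mk K A * mk K B := rfl

lemma mk_self : mk K K = 1 := rfl

lemma mk_op : mk K Aᵐᵒᵖ = (mk K A)⁻¹ := rfl

lemma mk_tensor_op : mk K (A ⊗[K] Aᵐᵒᵖ) = 1 := by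
  let f := AlgHom.mulLeftRight K A
  have hf : Function.Injective f := RingHom.injective f.toRingHom
  have hdim : finrank K (A ⊗[K] Aᵐᵒᵖ) = finrank K (End K A) := by
    rw [finrank_tensorProduct, ← (opLinearEquiv K (M := A)).finrank_eq, finrank_linearMap]
  have hf' : Function.Surjective f :=
    (LinearMap.injective_iff_surjective_of_finrank_eq_finrank (f := f.toLinearMap) hdim).mp hf
  have : NeZero (finrank K A) := ⟨finrank_pos.ne'⟩
  exact mk_eq_of_algEquiv_matrix (B := K)
    ((AlgEquiv.ofBijective f ⟨hf, hf'⟩).trans (algEquivMatrix (finBasis K A)))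

noncomputable instance : CommGroup (Br K) where
  mul_assoc x y z := by
    induction x using ind
    induction y using ind
    induction z using ind
    exact mk_congr (Algebra.TensorProduct.assoc K K K _ _ _)
  one_mul x := by
    induction x using ind
    exact mk_congr (Algebra.TensorProduct.lid K _)
  mul_one x := by
    induction x using ind
    exact mk_congr (Algebra.TensorProduct.rid K K _)
  inv_mul_cancel x := by
    induction x using ind with
    | h A => exact (mk_congr (Algebra.TensorProduct.comm K _ _)).trans (mk_tensor_op (A := A))
  mul_comm x y := by
    induction x using ind
    induction y using ind
    exact mk_congr (Algebra.TensorProduct.comm K _ _)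

end Br

section BaseChange

variable (K A B P : Type*) [Field K] [Ring A] [Algebra K A] [Ring B] [Algebra K B] [Field P]
  [Algebra K P]

lemma nonempty_baseChange_matrix_algEquiv (n : ℕ) :
    Nonempty (P ⊗[K] Matrix (Fin n) (Fin n) A ≃ₐ[P] Matrix (Fin n) (Fin n) (P ⊗[K] A)) := by
  exact ⟨(Algebra.TensorProduct.congr (Matrix.uniqueAlgEquiv (m := Unit)).symm .refl).trans <|
    (Matrix.kroneckerTMulAlgEquiv Unit (Fin n) K P P A).trans <|
    Matrix.reindexAlgEquiv P _ (Equiv.uniqueProd (Fin n) Unit)⟩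

lemma nonempty_baseChange_tensor_algEquiv :
    Nonempty (P ⊗[K] (A ⊗[K] B) ≃ₐ[P] (P ⊗[K] A) ⊗[P] (P ⊗[K] B)) :=
  let e := TensorProduct.AlgebraTensorModule.distribBaseChange K P A B
  ⟨.ofLinearEquiv e rfl ((LinearMap.map_mul_iff e.toLinearMap).mpr (by ext; simp [e]))⟩

end BaseChange

namespace Br

variable {K : Type u} [Field K] (P : Type u) [Field P] [Algebra K P]

/-- Extension of scalars `Br K → Br P`. -/
noncomputable def res : Br K →* Br P where
  toFun := Quotient.map (fun A ↦ .mk (.of P (P ⊗[K] A))) <| by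
    rintro A A' ⟨n, m, hn, hm, ⟨e⟩⟩
    obtain ⟨f⟩ := nonempty_baseChange_matrix_algEquiv K A P n
    obtain ⟨g⟩ := nonempty_baseChange_matrix_algEquiv K A' P m
    exact ⟨n, m, hn, hm, ⟨f.symm.trans <|
      (Algebra.TensorProduct.congr (AlgEquiv.refl (R := P) (A₁ := P)) e).trans g⟩⟩
  map_one' := mk_congr (K := P) (Algebra.TensorProduct.rid K P P)
  map_mul' x y := by
    induction x using ind with | h A => ?_
    induction y using ind with | h B => ?_
    obtain ⟨e⟩ := nonempty_baseChange_tensor_algEquiv K A B P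
    exact mk_congr e

lemma res_mk (A : Type u) [Ring A] [Algebra K A] [Algebra.IsCentral K A] [IsSimpleRing A]
    [FiniteDimensional K A] : res P (mk K A) = mk P (P ⊗[K] A) := rfl

end Br

/-! ### The index -/

lemma pos_of_finrank_eq_sq {K V : Type*} [Field K] [AddCommGroup V] [Module K V]
    [FiniteDimensional K V] [Nontrivial V] {n : ℕ} (h : finrank K V = n ^ 2) : 0 < n :=
  Nat.pos_of_ne_zero fun hn ↦ (finrank_pos (R := K) (M := V)).ne' (by simp [h, hn])

section Embedding

variable {K E R V : Type*} [Field K] [DivisionRing E] [Algebra K E] [Ring R] [Algebra K R]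
  [AddCommGroup V] [Module K V]

lemma finrank_dvd_of_algHom_end (φ : E →ₐ[K] End K V) : finrank K E ∣ finrank K V := by
  let : Module E V := .compHom _ φ.toRingHom
  have : IsScalarTower K E V := ⟨fun k x v ↦ congr($(map_smul φ k x) v)⟩
  exact ⟨_, (finrank_mul_finrank K E V).symm⟩

lemma nonempty_algHom_op_of_finrank_eq [FiniteDimensional K E] (φ : E ⊗[K] R →ₐ[K] End K V)
    (h : finrank K V = finrank K E) : Nonempty (R →ₐ[K] Eᵐᵒᵖ) := by
  let f := φ.comp (Algebra.TensorProduct.includeLeft : E →ₐ[K] E ⊗[K] R)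
  let g := φ.comp (Algebra.TensorProduct.includeRight : R →ₐ[K] E ⊗[K] R)
  have hfg (x : E) (r : R) : Commute (g r) (f x) := .map (by simp [Commute, SemiconjBy]) φ
  let : Module E V := .compHom _ f.toRingHom
  let : Module R V := .compHom _ g.toRingHom
  have : IsScalarTower K E V := ⟨fun k x v ↦ congr($(map_smul f k x) v)⟩
  have : IsScalarTower K R V := ⟨fun k r v ↦ congr($(map_smul g k r) v)⟩
  have : SMulCommClass R E V := ⟨fun r x v ↦ congr($((hfg x r).eq) v)⟩
  have : FiniteDimensional K V := finite_of_finrank_pos (h ▸ finrank_pos)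
  have : Module.Finite E V := .of_restrictScalars_finite K E V
  have hV : finrank E V = finrank E E := by
    have := finrank_mul_finrank K E V
    rw [h] at this
    rw [finrank_self]
    exact Nat.eq_of_mul_eq_mul_left finrank_pos (this.trans (mul_one _).symm)
  exact ⟨((AlgEquiv.moduleEndSelf K).symm.toAlgHom.comp
    ((LinearEquiv.ofFinrankEq V E hV).conjAlgEquiv K).toAlgHom).comp (Algebra.lsmul K E V)⟩

lemma nonempty_algHom_of_op {P A : Type*} [Field P] [Algebra K P] [Ring A] [Algebra K A]
    (f : P →ₐ[K] Aᵐᵒᵖ) : Nonempty (P →ₐ[K] A) :=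
  ⟨(AlgEquiv.opOp K A).symm.toAlgHom.comp <|
    (AlgHom.op f).comp (AlgEquiv.toOpposite K P).toAlgHom⟩

lemma nonempty_algEquiv_of_finrank_eq_one (h : finrank K E = 1) : Nonempty (E ≃ₐ[K] K) :=
  ⟨(AlgEquiv.ofBijective (Algebra.ofId K E) <| Algebra.bijective_algebraMap_iff.mpr
    (Subalgebra.bot_eq_top_iff_finrank_eq_one.mpr h).symm).symm⟩

end Embedding

section Index

variable {K : Type u} [Field K]

namespace Br

lemma exists_division (x : Br K) : ∃ (d : ℕ) (E : Type u) (_ : DivisionRing E) (_ : Algebra K E)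
    (_ : Algebra.IsCentral K E) (_ : FiniteDimensional K E),
    mk K E = x ∧ finrank K E = d ^ 2 := by
  induction x using ind with | h A => ?_
  obtain ⟨r, _, E, _, _, _, _, ⟨e⟩⟩ := exists_algEquiv_matrix K A
  obtain ⟨d, -, hd, -⟩ := exists_algebraicClosure_tensor_algEquiv K E
  exact ⟨d, E, _, _, inferInstance, inferInstance, (mk_eq_of_algEquiv_matrix e).symm, hd⟩

/-- The Schur index of a Brauer class: the degree of the division algebras representing it. -/
noncomputable def index (x : Br K) : ℕ := (exists_division x).choose

lemma exists_division_index (x : Br K) : ∃ (E : Type u) (_ : DivisionRing E) (_ : Algebra K E)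
    (_ : Algebra.IsCentral K E) (_ : FiniteDimensional K E),
    mk K E = x ∧ finrank K E = x.index ^ 2 :=
  (exists_division x).choose_spec

lemma finrank_eq_index_sq (E : Type u) [DivisionRing E] [Algebra K E] [Algebra.IsCentral K E]
    [FiniteDimensional K E] : finrank K E = (mk K E).index ^ 2 := by
  obtain ⟨F, _, _, _, _, hF, hdim⟩ := exists_division_index (mk K E)
  obtain ⟨n, m, hn, hm, ⟨e⟩⟩ := mk_eq_mk_iff.mp hF
  have : NeZero n := ⟨hn⟩
  have : NeZero m := ⟨hm⟩
  rw [← hdim, (finrank_eq_of_matrix_algEquiv e).2]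

lemma index_pos (x : Br K) : 0 < x.index := by
  obtain ⟨E, _, _, _, _, -, hE⟩ := exists_division_index x
  exact pos_of_finrank_eq_sq hE

lemma index_inv (x : Br K) : x⁻¹.index = x.index := by
  obtain ⟨E, _, _, _, _, rfl, -⟩ := exists_division_index x
  refine Nat.pow_left_injective two_ne_zero ?_
  simp only [← mk_op, ← finrank_eq_index_sq, (opLinearEquiv K (M := E)).finrank_eq]

lemma index_one : (1 : Br K).index = 1 :=
  Nat.pow_left_injective two_ne_zero (by simp [← mk_self, ← finrank_eq_index_sq])

lemma eq_one_of_index_eq_one {x : Br K} (h : x.index = 1) : x = 1 := by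
  obtain ⟨E, _, _, _, _, rfl, hE⟩ := exists_division_index x
  rw [h, one_pow] at hE
  obtain ⟨e⟩ := nonempty_algEquiv_of_finrank_eq_one hE
  exact mk_congr e

variable {A : Type u} [Ring A] [Algebra K A] [Algebra.IsCentral K A] [IsSimpleRing A]
  [FiniteDimensional K A] {n : ℕ}

lemma exists_algEquiv_matrix_index (hA : finrank K A = n ^ 2) :
    ∃ (r : ℕ) (_ : NeZero r) (E : Type u) (_ : DivisionRing E) (_ : Algebra K E)
      (_ : FiniteDimensional K E), n = r * (mk K A).index ∧
      finrank K E = (mk K A).index ^ 2 ∧ Nonempty (A ≃ₐ[K] Matrix (Fin r) (Fin r) E) := by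
  obtain ⟨r, hr, E, _, _, _, _, ⟨e⟩⟩ := exists_algEquiv_matrix K A
  have hE := finrank_eq_index_sq (K := K) E
  rw [← mk_eq_of_algEquiv_matrix e] at hE
  have hn := e.toLinearEquiv.finrank_eq
  rw [hA, finrank_matrix, hE, Fintype.card_fin] at hn
  exact ⟨r, hr, E, _, _, inferInstance,
    Nat.pow_left_injective two_ne_zero (hn.trans (by ring)), hE, ⟨e⟩⟩

lemma index_mk_dvd (hA : finrank K A = n ^ 2) : (mk K A).index ∣ n := by
  obtain ⟨r, _, E, _, _, _, hr, -⟩ := exists_algEquiv_matrix_index hA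
  exact ⟨r, by rw [hr, mul_comm]⟩

lemma index_mul_dvd (x y : Br K) : (x * y).index ∣ x.index * y.index := by
  obtain ⟨E, _, _, _, _, rfl, hE⟩ := exists_division_index x
  obtain ⟨F, _, _, _, _, rfl, hF⟩ := exists_division_index y
  exact index_mk_dvd (A := E ⊗[K] F) (by rw [finrank_tensorProduct, hE, hF, mul_pow])

lemma nonempty_algEquiv_matrix_of_mk_eq_one (h : mk K A = 1) (hA : finrank K A = n ^ 2) :
    Nonempty (A ≃ₐ[K] Matrix (Fin n) (Fin n) K) := by
  obtain ⟨r, _, E, _, _, _, hr, hE, ⟨e⟩⟩ := exists_algEquiv_matrix_index hA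
  rw [h, index_one, mul_one] at hr
  rw [h, index_one, one_pow] at hE
  subst hr
  obtain ⟨f⟩ := nonempty_algEquiv_of_finrank_eq_one hE
  exact ⟨e.trans f.mapMatrix⟩

lemma nonempty_algEquiv_of_mk_eq {E : Type u} [DivisionRing E] [Algebra K E]
    [Algebra.IsCentral K E] [FiniteDimensional K E] (h : mk K E = mk K A)
    (hdim : finrank K A = finrank K E) : Nonempty (A ≃ₐ[K] E) := by
  have hsplit : mk K (E ⊗[K] Aᵐᵒᵖ) = 1 := by rw [mk_tensor, mk_op, h, mul_inv_cancel]
  obtain ⟨e⟩ := nonempty_algEquiv_matrix_of_mk_eq_one hsplit (n := finrank K E) <| by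
    rw [finrank_tensorProduct, ← (opLinearEquiv K (M := A)).finrank_eq, hdim, sq]
  obtain ⟨f⟩ := nonempty_algHom_op_of_finrank_eq
    (Matrix.toLinAlgEquiv'.toAlgHom.comp e.toAlgHom) (by simp)
  let g : A →ₐ[K] E := AlgHom.unop f
  have hg : Function.Injective g := RingHom.injective g.toRingHom
  exact ⟨.ofBijective g ⟨hg, (LinearMap.injective_iff_surjective_of_finrank_eq_finrank
    (f := g.toLinearMap) hdim).mp hg⟩⟩

end Br

end Index

/-! ### Splitting fields and maximal subfields -/

section Splitting

variable {K P : Type u} [Field K] [Field P] [Algebra K P] {E : Type u} [Ring E]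
  [Algebra K E] [Algebra.IsCentral K E] [IsSimpleRing E] [FiniteDimensional K E] {c : ℕ}

lemma exists_algHom_end_of_res_eq_one (h : Br.res P (.mk K E) = 1) (hE : finrank K E = c ^ 2) :
    Nonempty (E ⊗[K] P →ₐ[K] End K (Fin c → P)) := by
  obtain ⟨e⟩ := Br.nonempty_algEquiv_matrix_of_mk_eq_one (A := P ⊗[K] E) h
    (by rw [finrank_baseChange, hE])
  exact ⟨((Algebra.lsmul K K (Fin c → P) : Matrix (Fin c) (Fin c) P →ₐ[K] _).comp
    (e.toAlgHom.restrictScalars K)).comp (Algebra.TensorProduct.comm K E P).toAlgHom⟩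

end Splitting

section Division

variable {K P E : Type u} [Field K] [Field P] [Algebra K P] [DivisionRing E]
  [Algebra K E] [Algebra.IsCentral K E] [FiniteDimensional K E]

lemma nonempty_algHom_of_res_eq_one (h : Br.res P (.mk K E) = 1)
    (hE : finrank K E = finrank K P ^ 2) : Nonempty (P →ₐ[K] E) := by
  have : FiniteDimensional K P := finite_of_finrank_pos (pos_of_finrank_eq_sq hE)
  obtain ⟨φ⟩ := exists_algHom_end_of_res_eq_one h hE
  obtain ⟨f⟩ := nonempty_algHom_op_of_finrank_eq φ (by simp [finrank_pi_fintype, hE, sq])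
  exact nonempty_algHom_of_op f

lemma Br.index_dvd_finrank_of_res_eq_one [FiniteDimensional K P] {x : Br K} (h : Br.res P x = 1) :
    x.index ∣ finrank K P := by
  obtain ⟨E, _, _, _, _, rfl, hE⟩ := exists_division_index x
  obtain ⟨φ⟩ := exists_algHom_end_of_res_eq_one h hE
  have := finrank_dvd_of_algHom_end (φ.comp Algebra.TensorProduct.includeLeft)
  rw [hE, finrank_pi_fintype, Finset.sum_const, Finset.card_univ, Fintype.card_fin, sq,
    smul_eq_mul] at this
  exact Nat.dvd_of_mul_dvd_mul_left (index_pos _) this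

end Division

section Subfield

/-- The action of `P ⊗[K] Aᵐᵒᵖ` on `A` in which `p ⊗ₜ op b` acts by `a ↦ j p * a * b`. -/
noncomputable def leftRightAction {K P A : Type*} [Field K] [Field P] [Algebra K P] [Ring A]
    [Algebra K A] (j : P →ₐ[K] A) : P ⊗[K] Aᵐᵒᵖ →ₐ[K] End K A :=
  (AlgHom.mulLeftRight K A).comp (Algebra.TensorProduct.map j (.id K Aᵐᵒᵖ))

variable {K P A : Type u} [Field K] [Field P] [Algebra K P] [Ring A] [Algebra K A]
  [Algebra.IsCentral K A] [IsSimpleRing A] [FiniteDimensional K A] {n : ℕ}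

lemma finrank_mul_index_res_dvd (j : P →ₐ[K] A) (hA : finrank K A = n ^ 2) :
    finrank K P * (Br.res P (.mk K A)).index ∣ n := by
  have : FiniteDimensional K P := .of_injective j.toLinearMap j.toRingHom.injective
  have hmk : Br.mk P (P ⊗[K] Aᵐᵒᵖ) = (Br.res P (.mk K A))⁻¹ := by
    rw [← Br.res_mk, Br.mk_op, map_inv]
  obtain ⟨s, _, E, _, _, _, hn, hE, ⟨e⟩⟩ :=
    Br.exists_algEquiv_matrix_index (K := P) (A := P ⊗[K] Aᵐᵒᵖ) (n := n)
      (by rw [finrank_baseChange, ← (opLinearEquiv K (M := A)).finrank_eq, hA])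
  rw [hmk, Br.index_inv] at hn hE
  let : Algebra K E := .compHom E (algebraMap K P)
  have : IsScalarTower K P E := .of_algebraMap_eq fun _ ↦ rfl
  have hKE := finrank_mul_finrank K P E
  have : FiniteDimensional K E := .trans K P E
  have hdvd := mul_finrank_dvd_of_matrix_algHom <|
    (leftRightAction j).comp (e.symm.toAlgHom.restrictScalars K)
  set d := (Br.res P (.mk K A)).index
  rw [← hKE, hE, hA, sq n] at hdvd
  nth_rewrite 1 [hn] at hdvd
  refine Nat.dvd_of_mul_dvd_mul_left (k := s * d) (hn ▸ pos_of_finrank_eq_sq hA) ?_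
  convert hdvd using 1
  ring

end Subfield

section MaximalSubfield

lemma exists_centralizer_eq (K A : Type*) [Field K] [Ring A] [Algebra K A] [FiniteDimensional K A] :
    ∃ S : Subalgebra K A, Subalgebra.centralizer K S = S := by
  have : WellFoundedGT (Subalgebra K A) :=
    (Subalgebra.toSubmodule : Subalgebra K A ↪o Submodule K A).wellFoundedGT
  obtain ⟨S, hS, hmax⟩ := exists_maximal_of_wellFoundedGT
    (fun S : Subalgebra K A ↦ S ≤ Subalgebra.centralizer K S) ⟨⊥, bot_le⟩
  refine ⟨S, le_antisymm (fun a ha ↦ ?_) hS⟩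
  let T := S ⊔ Algebra.adjoin K {a}
  have hST : T ≤ Subalgebra.centralizer K T := by
    have ha' : Algebra.adjoin K {a} ≤ Subalgebra.centralizer K S :=
      Algebra.adjoin_le (Set.singleton_subset_iff.mpr ha)
    rw [Subalgebra.centralizer_coe_sup]
    exact le_inf (sup_le hS ha') (sup_le ((Subalgebra.le_centralizer_iff ..).mp ha')
      fun x hx y hy ↦ setLike_mul_comm hy hx)
  exact hmax hST le_sup_left <|
    (le_sup_right : _ ≤ T) (Algebra.self_mem_adjoin_singleton K a)

variable {K P D : Type*} [Field K] [Field P] [Algebra K P] [DivisionRing D] [Algebra K D]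
  [FiniteDimensional K D] {j : P →ₐ[K] D}

lemma mem_range_leftRightAction (h : Subalgebra.centralizer K j.range ≤ j.range) {f : End K D}
    (hf : ∀ p a, f (j p * a) = j p * f a) : f ∈ (leftRightAction j).range := by
  let : Module (P ⊗[K] Dᵐᵒᵖ) D := .compHom _ (leftRightAction j).toRingHom
  have smul_def (p : P) (a b : D) : (p ⊗ₜ[K] op a) • b = j p * b * a :=
    AlgHom.mulLeftRight_apply K D (j p) (op a) b
  have : IsSimpleModule (P ⊗[K] Dᵐᵒᵖ) D := by
    refine isSimpleModule_iff_toSpanSingleton_surjective.mpr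
      ⟨inferInstance, fun a ha b ↦ ⟨1 ⊗ₜ op (a⁻¹ * b), ?_⟩⟩
    rw [LinearMap.toSpanSingleton_apply, smul_def, map_one, one_mul, mul_inv_cancel_left₀ ha]
  have exists_eq_mul (g : End (P ⊗[K] Dᵐᵒᵖ) D) : ∃ p, ∀ a, g a = j p * a := by
    have left (p : P) (a : D) : g (j p * a) = j p * g a := by
      simpa only [smul_def, mul_one] using g.map_smul (p ⊗ₜ op 1) a
    have right (a : D) : g a = g 1 * a := by
      simpa only [smul_def, map_one, one_mul] using g.map_smul (1 ⊗ₜ op a) 1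
    obtain ⟨p, hp : j p = g 1⟩ := h <| show g 1 ∈ Subalgebra.centralizer K j.range by
      rintro _ ⟨p, rfl⟩
      change j p * g 1 = g 1 * j p
      rw [← left, mul_one, right]
    exact ⟨p, fun a ↦ hp ▸ right a⟩
  let f' : End (End (P ⊗[K] Dᵐᵒᵖ) D) D :=
    { f with
      map_smul' := fun g a ↦ by
        obtain ⟨p, hp⟩ := exists_eq_mul g
        exact (congrArg f (hp a)).trans ((hf p a).trans (hp (f a)).symm) }
  obtain ⟨s, hs⟩ := finite_def.mp (inferInstance : Module.Finite K D)
  obtain ⟨t, ht⟩ := jacobson_density f' s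
  exact ⟨t, LinearMap.ext_on hs fun a ha ↦ (ht a ha).symm⟩

lemma finrank_le_sq_of_centralizer_le (h : Subalgebra.centralizer K j.range ≤ j.range) :
    finrank K D ≤ finrank K P ^ 2 := by
  let : Module P D := .compHom _ j.toRingHom
  have : IsScalarTower K P D :=
    ⟨fun k p a ↦ congr($(map_smul j k p) * a).trans (smul_mul_assoc ..)⟩
  have : FiniteDimensional K P := .of_injective j.toLinearMap j.toRingHom.injective
  have : Module.Finite P D := .of_restrictScalars_finite K P D
  have hle : finrank K (End P D) ≤ finrank K P * finrank K D := by
    have hinj : Function.Injective (LinearMap.restrictScalarsₗ K P D D K) :=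
      LinearMap.restrictScalars_injective K
    have hrange : (LinearMap.restrictScalarsₗ K P D D K).range ≤
        (leftRightAction j).toLinearMap.range := by
      rintro _ ⟨f, rfl⟩
      exact mem_range_leftRightAction h (f.map_smul ·)
    calc finrank K (End P D)
        = finrank K (LinearMap.restrictScalarsₗ K P D D K).range :=
          (LinearMap.finrank_range_of_inj hinj).symm
      _ ≤ finrank K (leftRightAction j).toLinearMap.range := Submodule.finrank_mono hrange
      _ ≤ finrank K (P ⊗[K] Dᵐᵒᵖ) := (leftRightAction j).toLinearMap.finrank_range_le
      _ = finrank K P * finrank K D := by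
          rw [finrank_tensorProduct, ← (opLinearEquiv K (M := D)).finrank_eq]
  have hD : finrank P D ≤ finrank K P := by
    rw [← finrank_mul_finrank K P (End P D), finrank_linearMap,
      ← finrank_mul_finrank K P D] at hle
    exact Nat.le_of_mul_le_mul_right (Nat.le_of_mul_le_mul_left hle finrank_pos) finrank_pos
  rw [← finrank_mul_finrank K P D, sq]
  exact Nat.mul_le_mul_left _ hD

end MaximalSubfield

lemma exists_field_algHom_of_finrank_eq_sq {K D : Type u} [Field K] [DivisionRing D] [Algebra K D]
    [Algebra.IsCentral K D] [FiniteDimensional K D] {n : ℕ} (hn : finrank K D = n ^ 2) :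
    ∃ (P : Type u) (_ : Field P) (_ : Algebra K P), finrank K P = n ∧ Nonempty (P →ₐ[K] D) := by
  obtain ⟨S, hS⟩ := exists_centralizer_eq K D
  have hcomm (x y : S) : x * y = y * x := Subtype.ext (hS.ge y.2 x x.2)
  let : CommRing S := { (inferInstance : Ring S) with mul_comm := hcomm }
  let : Field S := { fieldOfFiniteDimensional K S with }
  refine ⟨S, inferInstance, inferInstance, ?_, ⟨S.val⟩⟩
  have hdvd : finrank K S ∣ n := dvd_of_mul_right_dvd (finrank_mul_index_res_dvd S.val hn)
  have hle : finrank K D ≤ finrank K S ^ 2 :=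
    finrank_le_sq_of_centralizer_le (j := S.val) (by rw [Subalgebra.range_val, hS])
  exact (Nat.le_of_dvd (pos_of_finrank_eq_sq hn) hdvd).antisymm
    ((Nat.pow_le_pow_iff_left two_ne_zero).mp (hn ▸ hle))

/-! ### Reduced characteristic polynomials -/

open Polynomial

section Charpoly

variable {R ι κ : Type*} [CommRing R] [Fintype ι] [DecidableEq ι] [Fintype κ] [DecidableEq κ]

lemma charpoly_blockDiagonal_const (M : Matrix ι ι R) :
    (Matrix.blockDiagonal fun _ : κ ↦ M).charpoly = M.charpoly ^ Fintype.card κ := by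
  have : (Matrix.blockDiagonal fun _ : κ ↦ M).charmatrix =
      Matrix.blockDiagonal fun _ : κ ↦ M.charmatrix := by
    ext ⟨i, k⟩ ⟨j, l⟩ : 2
    simp only [Matrix.charmatrix_apply, Matrix.blockDiagonal_apply, Matrix.diagonal_apply,
      Prod.mk.injEq]
    by_cases h : k = l <;> simp [h]
  simp [Matrix.charpoly, this, Matrix.det_blockDiagonal]

lemma charpoly_lmul_matrix (M : Matrix ι ι R) :
    (Algebra.lmul R (Matrix ι ι R) M).charpoly = M.charpoly ^ Fintype.card ι := by
  rw [← LinearMap.charpoly_toMatrix _ (Matrix.stdBasis R ι ι), ← charpoly_blockDiagonal_const]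
  congr 1
  ext ⟨i, k⟩ ⟨j, l⟩
  have repr (N : Matrix ι ι R) : (Matrix.stdBasis R ι ι).repr N (i, k) = N i k := by
    simp [Matrix.stdBasis]
  rw [LinearMap.toMatrix_apply, repr, Matrix.blockDiagonal_apply, Matrix.stdBasis_eq_single]
  simp [Matrix.mul_apply, Matrix.single_apply, ite_and, eq_comm]

lemma map_charpoly_lmul {K L A : Type*} [Field K] [Field L] [Algebra K L] [Ring A] [Algebra K A]
    [FiniteDimensional K A] (e : L ⊗[K] A ≃ₐ[L] Matrix ι ι L) (a : A) :
    (Algebra.lmul K A a).charpoly.map (algebraMap K L) =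
      (e (1 ⊗ₜ a)).charpoly ^ Fintype.card ι := by
  rw [← charpoly_lmul_matrix, ← LinearMap.charpoly_baseChange, Algebra.baseChange_lmul,
    ← e.toLinearEquiv.charpoly_conj]
  congr 1
  ext1 M
  simp [LinearEquiv.conj_apply_apply]

end Charpoly

section MinimalPolynomial

variable {K V : Type*} [Field K] [AddCommGroup V] [Module K V] [FiniteDimensional K V]

lemma aeval_minpoly_of_charpoly_isRoot {L : Type*} [Field L] [Algebra K L] {f : End K V} {μ : L}
    (h : aeval μ f.charpoly = 0) : aeval μ (minpoly K f) = 0 := by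
  have hroot : (f.baseChange L).charpoly.IsRoot μ := by
    rwa [LinearMap.charpoly_baseChange, IsRoot, eval_map_algebraMap]
  obtain ⟨v, hv⟩ := ((End.hasEigenvalue_iff_isRoot_charpoly _ _).mpr hroot).exists_hasEigenvector
  have h0 := End.aeval_apply_of_hasEigenvector (p := (minpoly K f).map (algebraMap K L)) hv
  have hf : aeval (End.baseChangeHom K L V f) (minpoly K f) = 0 := by
    rw [aeval_algHom_apply, minpoly.aeval, map_zero]
  rw [aeval_map_algebraMap, show f.baseChange L = End.baseChangeHom K L V f from rfl, hf,
    LinearMap.zero_apply, eval_map_algebraMap] at h0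
  exact (smul_eq_zero.mp h0.symm).resolve_right hv.2

lemma exists_charpoly_eq_minpoly_pow {f : End K V} (hf : Irreducible (minpoly K f)) :
    ∃ k, f.charpoly = minpoly K f ^ k := by
  have hm := minpoly.monic (Algebra.IsIntegral.isIntegral (R := K) f)
  obtain ⟨k, r, hr, hdvd⟩ : ∃ k r, f.charpoly = minpoly K f ^ k * r ∧ ¬ minpoly K f ∣ r :=
    ⟨_, (FiniteMultiplicity.of_not_isUnit hf.not_isUnit
      f.charpoly_monic.ne_zero).exists_eq_pow_mul_and_not_dvd⟩
  refine ⟨k, ?_⟩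
  have hrm : r.Monic := (hm.pow _).of_mul_monic_left (hr ▸ f.charpoly_monic)
  suffices IsUnit r by rw [hr, hrm.eq_one_of_isUnit this, mul_one]
  by_contra hu
  obtain ⟨q, hq, hqr⟩ := WfDvdMonoid.exists_irreducible_factor hu hrm.ne_zero
  obtain ⟨μ, hμ⟩ := IsAlgClosed.exists_aeval_eq_zero (AlgebraicClosure K) q
    (degree_pos_of_irreducible hq).ne'
  have hroot := aeval_minpoly_of_charpoly_isRoot (f := f) (μ := μ)
    (aeval_eq_zero_of_dvd_aeval_eq_zero (hr ▸ hqr.mul_left _) hμ)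
  have hμ' : Irreducible (minpoly K μ) := minpoly.irreducible (Algebra.IsIntegral.isIntegral μ)
  have hassoc := (hμ'.associated_of_dvd hf (minpoly.dvd K μ hroot)).symm.trans
    (hμ'.associated_of_dvd hq (minpoly.dvd K μ hμ))
  exact hdvd (hassoc.dvd.trans hqr)

end MinimalPolynomial

section ReducedNorm

variable {K D : Type u} [Field K] [DivisionRing D] [Algebra K D] [Algebra.IsCentral K D]
  [FiniteDimensional K D] {n : ℕ}

lemma natDegree_minpoly_dvd (hn : finrank K D = n ^ 2) (x : D) :
    (minpoly K x).natDegree ∣ n := by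
  have hx := Algebra.IsIntegral.isIntegral (R := K) x
  have : Fact (Irreducible (minpoly K x)) := ⟨minpoly.irreducible hx⟩
  let j : AdjoinRoot (minpoly K x) →ₐ[K] D := Ideal.Quotient.liftₐ _ (aeval x) fun a ha ↦ by
    obtain ⟨b, rfl⟩ := Ideal.mem_span_singleton.mp ha
    simp
  have := dvd_of_mul_right_dvd (finrank_mul_index_res_dvd j hn)
  rwa [(AdjoinRoot.powerBasis (minpoly.ne_zero hx)).finrank, AdjoinRoot.powerBasis_dim] at this

lemma charpoly_mem_range {L : Type*} [Field L] [Algebra K L] (hn : finrank K D = n ^ 2)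
    (e : L ⊗[K] D ≃ₐ[L] Matrix (Fin n) (Fin n) L) (x : D) :
    ∃ f : K[X], (e (1 ⊗ₜ x)).charpoly = f.map (algebraMap K L) := by
  have hx := Algebra.IsIntegral.isIntegral (R := K) x
  have hmin : minpoly K (Algebra.lmul K D x) = minpoly K x :=
    minpoly.algHom_eq _ Algebra.lmul_injective x
  obtain ⟨k, hk⟩ := exists_charpoly_eq_minpoly_pow (f := Algebra.lmul K D x)
    (hmin ▸ minpoly.irreducible hx)
  rw [hmin] at hk
  obtain ⟨c, hc⟩ := natDegree_minpoly_dvd hn x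
  have hkc : k = c * n := by
    have hdeg := congrArg natDegree hk
    rw [LinearMap.charpoly_natDegree, natDegree_pow, hn, sq, mul_comm k] at hdeg
    nth_rewrite 1 [hc] at hdeg
    rw [mul_assoc] at hdeg
    exact (Nat.eq_of_mul_eq_mul_left (minpoly.natDegree_pos hx) hdeg).symm
  have hpow : (e (1 ⊗ₜ x)).charpoly ^ n = ((minpoly K x ^ c).map (algebraMap K L)) ^ n := by
    rw [← Polynomial.map_pow, ← pow_mul, ← hkc, ← hk, map_charpoly_lmul e, Fintype.card_fin]
  have hn0 : n ≠ 0 := (pos_of_finrank_eq_sq hn).ne'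
  refine ⟨minpoly K x ^ c, eq_of_monic_of_associated (Matrix.charpoly_monic _)
    (((minpoly.monic hx).pow c).map _) (associated_of_dvd_dvd ?_ ?_)⟩
  · exact (UniqueFactorizationMonoid.pow_dvd_pow_iff_dvd hn0).mp hpow.dvd
  · exact (UniqueFactorizationMonoid.pow_dvd_pow_iff_dvd hn0).mp hpow.symm.dvd

lemma det_mem_range {L : Type*} [Field L] [Algebra K L] (hn : finrank K D = n ^ 2)
    (e : L ⊗[K] D ≃ₐ[L] Matrix (Fin n) (Fin n) L) (x : D) :
    (e (1 ⊗ₜ x)).det ∈ (Algebra.linearMap K L).range := by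
  obtain ⟨f, hf⟩ := charpoly_mem_range hn e x
  exact ⟨(-1) ^ n * f.coeff 0, by simp [Matrix.det_eq_sign_charpoly_coeff, hf]⟩

end ReducedNorm

/-! ### Polarized determinants -/

section Polarization

variable {ι : Type*} [Fintype ι] [DecidableEq ι]

lemma sum_neg_one_pow_card_forall_notMem (r : ι → ι) :
    ∑ U : Finset ι with ∀ k, r k ∉ U, (-1 : ℤ) ^ U.card =
      if Function.Surjective r then 1 else 0 := by
  have hU : ({U : Finset ι | ∀ k, r k ∉ U} : Finset _) = (Finset.univ.image r)ᶜ.powerset := by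
    ext U
    simp only [Finset.mem_filter_univ, Finset.mem_powerset, Finset.subset_iff, Finset.mem_compl,
      Finset.mem_image, Finset.mem_univ, true_and, not_exists]
    exact ⟨fun h x hx k hk ↦ h k (hk ▸ hx), fun h k hk ↦ h hk k rfl⟩
  rw [hU, Finset.sum_powerset_neg_one_pow_card]
  refine if_congr ?_ rfl rfl
  rw [Finset.compl_eq_empty_iff, Finset.eq_univ_iff_forall]
  simp only [Finset.mem_image, Finset.mem_univ, true_and, Function.Surjective]

variable {R V W : Type*} [CommRing R] [AddCommGroup V] [Module R V] [AddCommGroup W] [Module R W]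

lemma sum_perm_eq_sum_neg_one_pow_smul
    (f : MultilinearMap R (fun _ : ι ↦ V) W) (g : ι → ι → V) :
    ∑ σ : Equiv.Perm ι, f (fun k ↦ g k (σ k)) =
      ∑ U : Finset ι, (-1 : ℤ) ^ U.card • f (fun k ↦ ∑ i ∈ Uᶜ, g k i) := by
  calc ∑ σ : Equiv.Perm ι, f (fun k ↦ g k (σ k))
    _ = ∑ r : ι → ι with Function.Surjective r, f (fun k ↦ g k (r k)) := by
      refine Finset.sum_bij (fun σ _ ↦ σ) (by simp [Equiv.surjective]) (by simp) ?_ (by simp)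
      intro r hr
      exact ⟨.ofBijective r (Finite.surjective_iff_bijective.mp (by simpa using hr)), by simp, rfl⟩
    _ = ∑ r : ι → ι, ∑ U : Finset ι with ∀ k, r k ∉ U, (-1 : ℤ) ^ U.card •
          f (fun k ↦ g k (r k)) := by
      rw [Finset.sum_filter]
      refine Finset.sum_congr rfl fun r _ ↦ ?_
      rw [← Finset.sum_smul, sum_neg_one_pow_card_forall_notMem, ite_smul, one_smul, zero_smul]
    _ = ∑ U : Finset ι, ∑ r : ι → ι with ∀ k, r k ∉ U, (-1 : ℤ) ^ U.card •
          f (fun k ↦ g k (r k)) := by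
      simp only [Finset.sum_filter]
      exact Finset.sum_comm
    _ = ∑ U : Finset ι, (-1 : ℤ) ^ U.card • f (fun k ↦ ∑ i ∈ Uᶜ, g k i) := by
      refine Finset.sum_congr rfl fun U _ ↦ ?_
      rw [MultilinearMap.map_sum_finset, Finset.smul_sum]
      exact Finset.sum_congr (by ext; simp) fun _ _ ↦ rfl

end Polarization

section PolarizedDeterminant

variable {R ι : Type*} [CommRing R] [Fintype ι] [DecidableEq ι]

/-- The determinant whose `k`-th column is the `j k`-th column of the `k`-th matrix. -/
def columnsDet (j : ι → ι) : MultilinearMap R (fun _ : ι ↦ Matrix ι ι R) R :=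
  Matrix.detRowAlternating.toMultilinearMap.compLinearMap fun k ↦
    LinearMap.pi fun l ↦ Matrix.entryLinearMap R R l (j k)

lemma columnsDet_apply (j : ι → ι) (X : ι → Matrix ι ι R) :
    columnsDet j X = Matrix.detRowAlternating fun k l ↦ X k l (j k) := rfl

lemma columnsDet_update_mul (i : ι) (M : Matrix ι ι R) (j : ι → ι) (X : ι → Matrix ι ι R) :
    columnsDet j (Function.update X i (X i * M)) =
      ∑ m, M m (j i) * columnsDet (Function.update j i m) X := by
  have h : (fun k l ↦ Function.update X i (X i * M) k l (j k)) =
      Function.update (fun k l ↦ X k l (j k)) i (∑ m, M m (j i) • fun l ↦ X i l m) := by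
    ext k l
    rcases eq_or_ne k i with rfl | hk
    · simp [Matrix.mul_apply, mul_comm]
    · simp [hk]
  rw [columnsDet_apply, h, AlternatingMap.map_update_sum]
  refine Finset.sum_congr rfl fun m _ ↦ ?_
  rw [AlternatingMap.map_update_smul, smul_eq_mul, columnsDet_apply]
  congr 2
  ext k l
  rcases eq_or_ne k i with rfl | hk
  · simp
  · simp [hk]

variable (R ι) in
/-- The full polarization of the determinant: the symmetric multilinear form whose value at
`(X, …, X)` is `n! * det X`. -/
def polarizedDet : MultilinearMap R (fun _ : ι ↦ Matrix ι ι R) R :=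
  ∑ σ : Equiv.Perm ι, (Equiv.Perm.sign σ : ℤ) • columnsDet σ

lemma polarizedDet_apply (X : ι → Matrix ι ι R) :
    polarizedDet R ι X = ∑ σ : Equiv.Perm ι, Matrix.detRowAlternating fun k l ↦ X (σ k) l k := by
  rw [polarizedDet, sum_apply, ← Equiv.sum_comp (Equiv.inv _)]
  refine Finset.sum_congr rfl fun σ _ ↦ ?_
  have := Matrix.detRowAlternating.map_perm (fun k l ↦ X k l (σ⁻¹ k)) σ
  simpa [columnsDet_apply, Function.comp_def, Units.smul_def] using this.symm

lemma polarizedDet_eq_sum_det (X : ι → Matrix ι ι R) :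
    polarizedDet R ι X = ∑ U : Finset ι, (-1 : ℤ) ^ U.card • (∑ i ∈ Uᶜ, X i).det := by
  rw [polarizedDet_apply]
  refine (sum_perm_eq_sum_neg_one_pow_smul Matrix.detRowAlternating.toMultilinearMap
    fun k i l ↦ X i l k).trans (Finset.sum_congr rfl fun U _ ↦ congrArg _ ?_)
  rw [← Matrix.det_transpose]
  refine congrArg Matrix.det ?_
  ext k l
  simp [Matrix.sum_apply]

lemma polarizedDet_single_one : polarizedDet R ι (fun i ↦ Matrix.single i i 1) = 1 := by
  rw [polarizedDet_apply, Finset.sum_eq_single 1]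
  · refine Eq.trans (congrArg Matrix.det ?_) Matrix.det_one
    ext k l
    simp [Matrix.single_apply, Matrix.one_apply]
  · intro σ _ hσ
    obtain ⟨k, hk⟩ := not_forall.mp (mt Equiv.ext hσ)
    refine AlternatingMap.map_coord_zero _ k ?_
    ext l
    simp [show σ k ≠ k from hk]
  · simp

lemma exists_polarizedDet_ne_zero {K L D : Type*} [Field K] [Field L] [Algebra K L] [Ring D]
    [Algebra K D] [FiniteDimensional K D] (e : L ⊗[K] D ≃ₐ[L] Matrix ι ι L) :
    ∃ y : ι → D, polarizedDet L ι (fun i ↦ e (1 ⊗ₜ y i)) ≠ 0 := by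
  by_contra! h
  have h0 : polarizedDet L ι = 0 :=
    Basis.ext_multilinear (fun _ ↦ ((finBasis K D).baseChange L).map e.toLinearEquiv)
      fun v ↦ by simpa using h fun i ↦ finBasis K D (v i)
  simpa [h0] using polarizedDet_single_one (R := L) (ι := ι)

end PolarizedDeterminant

section RationalForms

variable {K L : Type*} [Field K] [Field L] [Algebra K L]

lemma finrank_le_card_of_algebraMap_comp_mem_span {X V ι : Type*} [Finite X] [AddCommGroup V]
    [Module K V] [FiniteDimensional K V] [Fintype ι] {f : V →ₗ[K] X → K} (hf : Function.Injective f)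
    {v : ι → X → L} (h : ∀ x, algebraMap K L ∘ f x ∈ Submodule.span L (Set.range v)) :
    finrank K V ≤ Fintype.card ι := by
  have hb := linearIndependent_algebraMap_comp_iff (S := L).mpr
    ((finBasis K V).linearIndependent.map' f (LinearMap.ker_eq_bot.mpr hf))
  calc finrank K V
    _ = finrank L (Submodule.span L (Set.range _)) := by
      rw [finrank_span_eq_card hb, Fintype.card_fin]
    _ ≤ finrank L (Submodule.span L (Set.range v)) := by
      have := FiniteDimensional.span_of_finite L (Set.finite_range v)
      refine Submodule.finrank_mono (Submodule.span_le.mpr ?_)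
      rintro _ ⟨i, rfl⟩
      exact h _
    _ ≤ Fintype.card ι := finrank_range_le_card v

variable {ι D : Type*} [Fintype ι] [DecidableEq ι] [Ring D] [Algebra K D]
  (ρ : D →ₐ[K] Matrix ι ι L)

/-- The functions on `D ^ ι` spanned over `L` by the determinants of matrices whose columns are
columns of `ρ (y k)`, `k : ι`. -/
def columnForms : Submodule L ((ι → D) → L) :=
  Submodule.span L (Set.range fun j y ↦ columnsDet j (ρ ∘ y))

/-- The `K`-valued forms in `columnForms ρ`. It is a right `D ⊗ ⋯ ⊗ D`-module of dimension at most
`n ^ n`, which forces `D ⊗ ⋯ ⊗ D` to split. -/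
def rationalForms : Submodule K (MultilinearMap K (fun _ : ι ↦ D) K) :=
  ((columnForms ρ).restrictScalars K).comap
    ({ toFun F := algebraMap K L ∘ F
       map_add' _ _ := funext fun _ ↦ map_add _ _ _
       map_smul' _ _ := funext fun _ ↦ map_smul (Algebra.linearMap K L) _ _ } :
      MultilinearMap K (fun _ : ι ↦ D) K →ₗ[K] (ι → D) → L)

variable {ρ} in
lemma mem_rationalForms {F : MultilinearMap K (fun _ : ι ↦ D) K} :
    F ∈ rationalForms ρ ↔ algebraMap K L ∘ F ∈ columnForms ρ := Iff.rfl

lemma finrank_rationalForms_le [FiniteDimensional K D] :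
    finrank K (rationalForms ρ) ≤ Fintype.card ι ^ Fintype.card ι := by
  let b := finBasis K D
  let f : rationalForms ρ →ₗ[K] (ι → Fin (finrank K D)) → K :=
    { toFun F v := F.1 (b ∘ v), map_add' _ _ := rfl, map_smul' _ _ := rfl }
  have hf : Function.Injective f := fun F G h ↦
    Subtype.ext (Basis.ext_multilinear (fun _ ↦ b) fun v ↦ congrFun h v)
  rw [← Fintype.card_fun]
  refine finrank_le_card_of_algebraMap_comp_mem_span (V := rationalForms ρ) (L := L) hf
    (v := fun j v ↦ columnsDet j (ρ ∘ b ∘ v)) fun F ↦ ?_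
  have := Submodule.mem_map_of_mem (f := LinearMap.funLeft L L (b ∘ · : _ → ι → D))
    (mem_rationalForms.mp F.2)
  rwa [columnForms, Submodule.map_span, ← Set.range_comp] at this

end RationalForms

/-! ### The period divides the index -/

section SlotAction

variable {K ι D : Type*} [Field K] [DecidableEq ι] [Ring D] [Algebra K D]

lemma compLinearMap_update_mulRight (F : MultilinearMap K (fun _ : ι ↦ D) K) (i : ι) (d : D)
    (y : ι → D) : F.compLinearMap (Function.update (fun _ ↦ .id) i (.mulRight K d)) y =
      F (Function.update y i (y i * d)) := by
  refine congrArg F (funext fun k ↦ ?_)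
  rcases eq_or_ne k i with rfl | hk
  · simp
  · simp [hk]

variable (K) in
/-- The action of `D` on multilinear forms by right multiplication of the `i`-th variable. -/
noncomputable def slotAction (i : ι) : D →ₐ[K] End K (MultilinearMap K (fun _ : ι ↦ D) K) :=
  .ofLinearMap
    ((MultilinearMap.compLinearMapMultilinear.toLinearMap (fun _ ↦ .id) i).comp
      (LinearMap.mul K D).flip)
    (by
      ext F y
      exact (compLinearMap_update_mulRight F i 1 y).trans (by simp))
    (fun d d' ↦ by
      ext F y
      refine (compLinearMap_update_mulRight F i _ y).trans ?_
      refine ((compLinearMap_update_mulRight _ i d y).trans ?_).symm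
      refine (compLinearMap_update_mulRight F i d' _).trans ?_
      simp [mul_assoc])

lemma slotAction_apply (i : ι) (d : D) (F : MultilinearMap K (fun _ : ι ↦ D) K) (y : ι → D) :
    slotAction K i d F y = F (Function.update y i (y i * d)) :=
  compLinearMap_update_mulRight F i d y

lemma commute_slotAction {i j : ι} (hij : i ≠ j) (d d' : D) :
    Commute (slotAction K i d) (slotAction K j d') := by
  ext F y
  simp [slotAction_apply, hij, hij.symm, Function.update_comm hij]

variable {L : Type*} [Field L] [Algebra K L] [Fintype ι] {ρ : D →ₐ[K] Matrix ι ι L}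

variable (ρ) in
lemma polarizedDet_mem_columnForms : (fun y ↦ polarizedDet L ι (ρ ∘ y)) ∈ columnForms ρ := by
  have h : (fun y : ι → D ↦ polarizedDet L ι (ρ ∘ y)) =
      ∑ σ : Equiv.Perm ι, (Equiv.Perm.sign σ : ℤ) • fun y ↦ columnsDet σ (ρ ∘ y) := by
    ext y
    simp [polarizedDet]
  rw [h]
  exact Submodule.sum_mem _ fun σ _ ↦
    Submodule.smul_of_tower_mem _ _ (Submodule.subset_span ⟨σ, rfl⟩)

lemma columnForms_update_mul_mem {G : (ι → D) → L} (hG : G ∈ columnForms ρ) (i : ι) (d : D) :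
    (fun y ↦ G (Function.update y i (y i * d))) ∈ columnForms ρ := by
  induction hG using Submodule.span_induction with
  | mem G hG =>
    obtain ⟨j, rfl⟩ := hG
    have h : (fun y : ι → D ↦ columnsDet j (ρ ∘ Function.update y i (y i * d))) =
        ∑ m, ρ d m (j i) • fun y ↦ columnsDet (Function.update j i m) (ρ ∘ y) := by
      ext y
      rw [Function.comp_update, map_mul]
      simpa using columnsDet_update_mul i (ρ d) j (ρ ∘ y)
    rw [h]
    exact Submodule.sum_mem _ fun m _ ↦ Submodule.smul_mem _ _ (Submodule.subset_span ⟨_, rfl⟩)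
  | zero => exact Submodule.zero_mem _
  | add G H _ _ hG hH => exact Submodule.add_mem _ hG hH
  | smul c G _ hG => exact Submodule.smul_mem _ c hG

lemma slotAction_mem_rationalForms (i : ι) (d : D) {F : MultilinearMap K (fun _ : ι ↦ D) K}
    (hF : F ∈ rationalForms ρ) : slotAction K i d F ∈ rationalForms ρ := by
  rw [mem_rationalForms] at hF ⊢
  convert columnForms_update_mul_mem hF i d using 2 with y
  exact congrArg _ (slotAction_apply i d F y)

end SlotAction

section Torsion

/-- The restriction of a representation to an invariant subspace. -/
def subrepresentation {K A V : Type*} [Field K] [Ring A] [Algebra K A] [AddCommGroup V] [Module K V]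
    (φ : A →ₐ[K] End K V) (M : Submodule K V) (h : ∀ a, ∀ v ∈ M, φ a v ∈ M) : A →ₐ[K] End K M :=
  .ofLinearMap
    { toFun a := (φ a).restrict (h a)
      map_add' _ _ := by ext; simp
      map_smul' _ _ := by ext; simp }
    (by ext; simp) (fun _ _ ↦ by ext; simp)

lemma exists_pow_algHom {K A : Type u} {R : Type*} [Field K] [Ring A] [Algebra K A]
    [Algebra.IsCentral K A] [IsSimpleRing A] [FiniteDimensional K A] [Ring R] [Algebra K R] {k : ℕ}
    (φ : Fin k → A →ₐ[K] R) (hφ : ∀ i j, i ≠ j → ∀ a b, Commute (φ i a) (φ j b)) :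
    ∃ (T : Type u) (_ : Ring T) (_ : Algebra K T) (_ : Algebra.IsCentral K T)
      (_ : IsSimpleRing T) (_ : FiniteDimensional K T), Br.mk K T = Br.mk K A ^ k ∧
      finrank K T = finrank K A ^ k ∧
      ∃ ψ : T →ₐ[K] R, ∀ r, (∀ i a, Commute r (φ i a)) → ∀ t, Commute r (ψ t) := by
  induction k with
  | zero =>
    exact ⟨K, inferInstance, inferInstance, inferInstance, inferInstance, inferInstance,
      by rw [Br.mk_self, pow_zero], by simp, Algebra.ofId K R,
      fun r _ t ↦ (Algebra.commutes t r).symm⟩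
  | succ k ih =>
    obtain ⟨T, _, _, _, _, _, hmk, hdim, ψ, hψ⟩ :=
      ih (fun i ↦ φ i.succ) fun i j hij ↦ hφ _ _ (by simpa using hij)
    have hcomm (a : A) (t : T) : Commute (φ 0 a) (ψ t) :=
      hψ _ (fun i b ↦ hφ _ _ (Fin.succ_ne_zero i).symm _ _) t
    refine ⟨A ⊗[K] T, inferInstance, inferInstance, inferInstance, inferInstance, inferInstance,
      by rw [Br.mk_tensor, hmk, pow_succ'], by rw [finrank_tensorProduct, hdim, pow_succ'],
      Algebra.TensorProduct.lift (φ 0) ψ hcomm, fun r hr t ↦ ?_⟩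
    induction t with
    | zero => simp
    | add s t hs ht => simpa using hs.add_right ht
    | tmul a t => simpa using (hr 0 a).mul_right (hψ r (fun i b ↦ hr _ b) t)

variable {K D : Type u} [Field K] [DivisionRing D] [Algebra K D] [Algebra.IsCentral K D]
  [FiniteDimensional K D] {n : ℕ}

lemma rationalForms_ne_bot {L : Type*} [Field L] [Algebra K L] (hn : finrank K D = n ^ 2)
    (e : L ⊗[K] D ≃ₐ[L] Matrix (Fin n) (Fin n) L) {ρ : D →ₐ[K] Matrix (Fin n) (Fin n) L}
    (hρ : ∀ x, ρ x = e (1 ⊗ₜ x)) : rationalForms ρ ≠ ⊥ := by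
  let N : MultilinearMap K (fun _ : Fin n ↦ D) L :=
    ((polarizedDet L (Fin n)).restrictScalars K).compLinearMap fun _ ↦ ρ.toLinearMap
  have hN (y) : N y ∈ (Algebra.linearMap K L).range := by
    change polarizedDet L (Fin n) (fun i ↦ ρ (y i)) ∈ _
    rw [polarizedDet_eq_sum_det]
    refine Submodule.sum_mem _ fun U _ ↦ Submodule.smul_of_tower_mem _ _ ?_
    rw [← map_sum, hρ]
    exact det_mem_range hn e _
  let q := LinearEquiv.ofInjective (Algebra.linearMap K L) (algebraMap K L).injective
  let F : MultilinearMap K (fun _ : Fin n ↦ D) K :=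
    q.symm.toLinearMap.compMultilinearMap (N.codRestrict _ hN)
  have hF (y) : algebraMap K L (F y) = polarizedDet L (Fin n) (ρ ∘ y) :=
    congrArg Subtype.val (q.apply_symm_apply ⟨N y, hN y⟩)
  refine (Submodule.ne_bot_iff _).mpr ⟨F, ?_, fun h ↦ ?_⟩
  · rw [mem_rationalForms, show algebraMap K L ∘ F = _ from funext hF]
    exact polarizedDet_mem_columnForms ρ
  · obtain ⟨y, hy⟩ := exists_polarizedDet_ne_zero e
    refine hy ?_
    simpa [h, Function.comp_def, hρ] using (hF y).symm

lemma pow_eq_one_of_nontrivial {V : Type*} [AddCommGroup V] [Module K V] [FiniteDimensional K V]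
    [Nontrivial V] (hn : finrank K D = n ^ 2) (hV : finrank K V ≤ n ^ n)
    (φ : Fin n → D →ₐ[K] End K V) (hφ : ∀ i j, i ≠ j → ∀ a b, Commute (φ i a) (φ j b)) :
    Br.mk K D ^ n = 1 := by
  obtain ⟨T, _, _, _, _, _, hmk, hT, ψ, -⟩ := exists_pow_algHom φ hφ
  rw [hn, ← pow_mul, mul_comm, pow_mul] at hT
  obtain ⟨r, _, E, _, _, _, hr, hE, ⟨e⟩⟩ := Br.exists_algEquiv_matrix_index hT
  have hle : n ^ n * (Br.mk K T).index ≤ n ^ n * 1 := by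
    rw [mul_one]
    refine (Nat.le_of_dvd finrank_pos ?_).trans hV
    rw [hr, mul_assoc, ← sq, ← hE]
    exact mul_finrank_dvd_of_matrix_algHom (ψ.comp e.symm.toAlgHom)
  have hn0 : 0 < n := pos_of_finrank_eq_sq hn
  rw [← hmk]
  exact Br.eq_one_of_index_eq_one <|
    (Nat.le_of_mul_le_mul_left hle (by positivity)).antisymm (Br.index_pos _)

theorem Br.pow_index_eq_one (x : Br K) : x ^ x.index = 1 := by
  obtain ⟨E, _, _, _, _, rfl, hE⟩ := exists_division_index x
  obtain ⟨m, hm, hm2, ⟨e⟩⟩ := exists_algebraicClosure_tensor_algEquiv K E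
  obtain rfl : (mk K E).index = m := Nat.pow_left_injective two_ne_zero (hE.symm.trans hm2)
  let ρ : E →ₐ[K] Matrix (Fin _) (Fin _) (AlgebraicClosure K) :=
    (e.toAlgHom.restrictScalars K).comp Algebra.TensorProduct.includeRight
  have := Submodule.nontrivial_iff_ne_bot.mpr (rationalForms_ne_bot hE e (ρ := ρ) fun _ ↦ rfl)
  refine pow_eq_one_of_nontrivial (V := rationalForms ρ) hE
    (by simpa using finrank_rationalForms_le ρ)
    (fun i ↦ subrepresentation (slotAction K i) _ fun d _ ↦ slotAction_mem_rationalForms i d) ?_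
  intro i j hij a b
  ext1 F
  exact Subtype.ext (LinearMap.congr_fun (commute_slotAction hij a b) F.1)

end Torsion

/-! ### Primary decomposition -/

section PrimaryDecomposition

variable {K : Type u} [Field K] {n₁ n₂ : ℕ}

lemma index_res_dvd {P A : Type u} [Field P] [Algebra K P] [Ring A] [Algebra K A]
    [Algebra.IsCentral K A] [IsSimpleRing A] [FiniteDimensional K A] (hn₁ : 0 < n₁) (j : P →ₐ[K] A)
    (hA : finrank K A = (n₁ * n₂) ^ 2) (hP : finrank K P = n₁) :
    (Br.res P (.mk K A)).index ∣ n₂ :=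
  Nat.dvd_of_mul_dvd_mul_left hn₁ <| by
    simpa only [hP] using finrank_mul_index_res_dvd j hA

lemma Br.exists_mul_eq_of_coprime {P Q : Type u} [Field P] [Algebra K P] [Field Q] [Algebra K Q]
    [FiniteDimensional K P] [FiniteDimensional K Q] {x : Br K} (hx : x.index = n₁ * n₂)
    (hcop : n₁.Coprime n₂) (hP : finrank K P = n₁) (hQ : finrank K Q = n₂)
    (hxP : (Br.res P x).index ∣ n₂) (hxQ : (Br.res Q x).index ∣ n₁) :
    ∃ y z : Br K, y * z = x ∧ y.index = n₁ ∧ z.index = n₂ := by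
  have hpow {F : Type u} [Field F] [Algebra K F] {m : ℕ} (h : (Br.res F x).index ∣ m) (c : ℤ) :
      Br.res F (x ^ (m * c)) = 1 := by
    obtain ⟨t, rfl⟩ := h
    rw [map_zpow, zpow_mul, zpow_natCast, pow_mul, pow_index_eq_one, one_pow, one_zpow]
  have hbez : (n₂ : ℤ) * n₁.gcdB n₂ + n₁ * n₁.gcdA n₂ = 1 := by
    rw [add_comm, ← Nat.gcd_eq_gcd_ab, hcop, Nat.cast_one]
  let y := x ^ (n₂ * n₁.gcdB n₂)
  let z := x ^ (n₁ * n₁.gcdA n₂)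
  have hyz : y * z = x := by rw [← zpow_add, hbez, zpow_one]
  have hy : y.index ∣ n₁ := hP ▸ index_dvd_finrank_of_res_eq_one (hpow hxP _)
  have hz : z.index ∣ n₂ := hQ ▸ index_dvd_finrank_of_res_eq_one (hpow hxQ _)
  have hdvd : n₁ * n₂ ∣ y.index * z.index := hx ▸ hyz ▸ index_mul_dvd y z
  refine ⟨y, z, hyz, hy.antisymm ?_, hz.antisymm ?_⟩
  · exact (hcop.coprime_dvd_right hz).dvd_of_dvd_mul_right (dvd_of_mul_right_dvd hdvd)
  · exact (hcop.symm.coprime_dvd_right hy).dvd_of_dvd_mul_left (dvd_of_mul_left_dvd hdvd)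

lemma exists_algEquiv_tensor_of_coprime {D P Q : Type u} [DivisionRing D] [Algebra K D]
    [Algebra.IsCentral K D] [FiniteDimensional K D] [Field P] [Algebra K P] [Field Q] [Algebra K Q]
    (hD : finrank K D = (n₁ * n₂) ^ 2) (hcop : n₁.Coprime n₂)
    (hP : finrank K P = n₁) (hQ : finrank K Q = n₂) (f : P →ₐ[K] D) (g : Q →ₐ[K] D) :
    ∃ (A : Type u) (_ : DivisionRing A) (_ : Algebra K A) (_ : Algebra.IsCentral K A)
      (_ : FiniteDimensional K A) (B : Type u) (_ : DivisionRing B) (_ : Algebra K B)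
      (_ : Algebra.IsCentral K B) (_ : FiniteDimensional K B),
      finrank K A = n₁ ^ 2 ∧ finrank K B = n₂ ^ 2 ∧ Nonempty (D ≃ₐ[K] A ⊗[K] B) := by
  have : FiniteDimensional K P := .of_injective f.toLinearMap f.toRingHom.injective
  have : FiniteDimensional K Q := .of_injective g.toLinearMap g.toRingHom.injective
  have hx : (Br.mk K D).index = n₁ * n₂ :=
    Nat.pow_left_injective two_ne_zero (by simp [← Br.finrank_eq_index_sq, hD])
  obtain ⟨y, z, hyz, rfl, rfl⟩ := Br.exists_mul_eq_of_coprime hx hcop hP hQ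
    (index_res_dvd (hP ▸ finrank_pos) f hD hP)
    (index_res_dvd (hQ ▸ finrank_pos) g (by rw [hD, mul_comm]) hQ)
  obtain ⟨A, _, _, _, _, rfl, hA⟩ := Br.exists_division_index y
  obtain ⟨B, _, _, _, _, rfl, hB⟩ := Br.exists_division_index z
  obtain ⟨e⟩ := Br.nonempty_algEquiv_of_mk_eq (A := A ⊗[K] B) (E := D)
    (by rw [Br.mk_tensor, hyz]) (by rw [finrank_tensorProduct, hA, hB, hD, mul_pow])
  exact ⟨A, _, _, ‹_›, ‹_›, B, _, _, ‹_›, ‹_›, hA, hB, ⟨e.symm⟩⟩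

end PrimaryDecomposition

section MaximalSubfields

variable {K : Type u} [Field K] {n₁ n₂ : ℕ}

lemma nonempty_algHom_left_of_algHom_tensor {P E₁ E₂ : Type u} [Field P] [Algebra K P]
    [DivisionRing E₁] [Algebra K E₁] [Algebra.IsCentral K E₁] [FiniteDimensional K E₁]
    [Ring E₂] [Algebra K E₂] [Algebra.IsCentral K E₂] [IsSimpleRing E₂] [FiniteDimensional K E₂]
    (hcop : n₁.Coprime n₂) (hE₁ : finrank K E₁ = n₁ ^ 2) (hE₂ : finrank K E₂ = n₂ ^ 2)
    (hP : finrank K P = n₁) (j : P →ₐ[K] E₁ ⊗[K] E₂) : Nonempty (P →ₐ[K] E₁) := by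
  have hn₁ : 0 < n₁ := pos_of_finrank_eq_sq hE₁
  let x := Br.res P (.mk K E₁)
  let y := Br.res P (.mk K E₂)
  have hx : x.index ∣ n₁ := Br.index_mk_dvd (A := P ⊗[K] E₁) (by rw [finrank_baseChange, hE₁])
  have hy : y.index ∣ n₂ := Br.index_mk_dvd (A := P ⊗[K] E₂) (by rw [finrank_baseChange, hE₂])
  have hxy : (x * y).index ∣ n₂ := by
    rw [← map_mul, ← Br.mk_tensor]
    exact index_res_dvd hn₁ j (by rw [finrank_tensorProduct, hE₁, hE₂, mul_pow]) hP
  have hx' : x.index ∣ n₂ * n₂ := calc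
    x.index = (x * y * y⁻¹).index := by rw [mul_inv_cancel_right]
    _ ∣ (x * y).index * y⁻¹.index := Br.index_mul_dvd _ _
    _ ∣ n₂ * n₂ := mul_dvd_mul hxy (by rwa [Br.index_inv])
  exact nonempty_algHom_of_res_eq_one
    (Br.eq_one_of_index_eq_one (Nat.eq_one_of_dvd_coprimes (hcop.mul_right hcop) hx hx'))
    (hP ▸ hE₁)

lemma exists_field_of_algEquiv_tensor {X X₁ X₂ P Q : Type u} [DivisionRing X] [Algebra K X]
    [Ring X₁] [Nontrivial X₁] [Algebra K X₁] [Ring X₂] [Nontrivial X₂] [Algebra K X₂]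
    [Field P] [Algebra K P] [Field Q] [Algebra K Q] [FiniteDimensional K P] [FiniteDimensional K Q]
    (e : X ≃ₐ[K] X₁ ⊗[K] X₂) (f : P →ₐ[K] X₁) (g : Q →ₐ[K] X₂) :
    ∃ (F : Type u) (_ : Field F) (_ : Algebra K F), finrank K F = finrank K P * finrank K Q ∧
      Nonempty (P →ₐ[K] F) ∧ Nonempty (Q →ₐ[K] F) ∧ Nonempty (F →ₐ[K] X) := by
  let φ : P ⊗[K] Q →ₐ[K] X := e.symm.toAlgHom.comp (Algebra.TensorProduct.map f g)
  have hφ : Function.Injective φ := e.symm.injective.comp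
    (TensorProduct.map_injective_of_flat_flat f.toLinearMap g.toLinearMap
      f.toRingHom.injective g.toRingHom.injective)
  have : IsDomain (P ⊗[K] Q) := hφ.isDomain φ.toRingHom
  let : Field (P ⊗[K] Q) := { fieldOfFiniteDimensional K (P ⊗[K] Q) with }
  exact ⟨P ⊗[K] Q, inferInstance, inferInstance, finrank_tensorProduct,
    ⟨Algebra.TensorProduct.includeLeft⟩, ⟨Algebra.TensorProduct.includeRight⟩, ⟨φ⟩⟩

lemma nonempty_algHom_left_of_forall_algHom {X X₁ X₂ Y Y₁ Y₂ P : Type u}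
    [DivisionRing X] [Algebra K X] [Ring X₁] [Nontrivial X₁] [Algebra K X₁]
    [DivisionRing X₂] [Algebra K X₂] [Algebra.IsCentral K X₂] [FiniteDimensional K X₂]
    [Ring Y] [Algebra K Y]
    [DivisionRing Y₁] [Algebra K Y₁] [Algebra.IsCentral K Y₁] [FiniteDimensional K Y₁]
    [Ring Y₂] [Algebra K Y₂] [Algebra.IsCentral K Y₂] [IsSimpleRing Y₂] [FiniteDimensional K Y₂]
    [Field P] [Algebra K P] [FiniteDimensional K P]
    (eX : X ≃ₐ[K] X₁ ⊗[K] X₂) (eY : Y ≃ₐ[K] Y₁ ⊗[K] Y₂) (hcop : n₁.Coprime n₂)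
    (hX₂ : finrank K X₂ = n₂ ^ 2) (hY₁ : finrank K Y₁ = n₁ ^ 2) (hY₂ : finrank K Y₂ = n₂ ^ 2)
    (h : ∀ (F : Type u) [Field F] [Algebra K F], finrank K F = n₁ * n₂ →
      Nonempty (F →ₐ[K] X) → Nonempty (F →ₐ[K] Y))
    (hP : finrank K P = n₁) (f : P →ₐ[K] X₁) : Nonempty (P →ₐ[K] Y₁) := by
  obtain ⟨Q, _, _, hQ, ⟨g⟩⟩ := exists_field_algHom_of_finrank_eq_sq hX₂
  have : FiniteDimensional K Q := .of_injective g.toLinearMap g.toRingHom.injective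
  obtain ⟨F, _, _, hF, ⟨i⟩, -, hFX⟩ := exists_field_of_algEquiv_tensor eX f g
  obtain ⟨k⟩ := h F (by rw [hF, hP, hQ]) hFX
  exact nonempty_algHom_left_of_algHom_tensor hcop hY₁ hY₂ hP (eY.toAlgHom.comp (k.comp i))

end MaximalSubfields

section MatrixModel

variable {K A : Type} [Field K] [DivisionRing A] [Algebra K A] [Algebra.IsCentral K A] {m : ℕ}

lemma exists_subalgebra_matrix_algEquiv [FiniteDimensional K A] (hm : finrank K A = m) :
    ∃ S : Subalgebra K (Matrix (Fin m) (Fin m) K), IsDivisionSubalgebra S ∧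
      Subalgebra.center K S = ⊥ ∧ finrank K S = m ∧ Nonempty (A ≃ₐ[K] S) := by
  let b := finBasisOfFinrankEq K A hm
  let e := AlgEquiv.ofInjective (Algebra.leftMulMatrix b) (Algebra.leftMulMatrix_injective b)
  have := Algebra.IsCentral.of_algEquiv K _ _ e
  refine ⟨(Algebra.leftMulMatrix b).range, fun x hx ↦ ?_, Algebra.IsCentral.center_eq_bot K _,
    e.toLinearEquiv.finrank_eq.symm.trans hm, ⟨e⟩⟩
  obtain ⟨a, rfl⟩ := e.surjective x
  have ha : a ≠ 0 := by simpa using hx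
  exact ⟨e a⁻¹, by rw [← map_mul, mul_inv_cancel₀ ha, map_one],
    by rw [← map_mul, inv_mul_cancel₀ ha, map_one]⟩

end MatrixModel

end CentralSimple

namespace SameMaxSubfields

open Module CentralSimple

variable {K : Type} [Field K] {n₁ n₂ : ℕ}

lemma symm {A B : Type} [Ring A] [Ring B] [Algebra K A] [Algebra K B] {n : ℕ}
    (h : SameMaxSubfields K n A B) : SameMaxSubfields K n B A :=
  fun P _ _ hP ↦ (h P hP).symm

lemma congr_left {A S B : Type} [Ring A] [Ring S] [Ring B] [Algebra K A] [Algebra K S]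
    [Algebra K B] {n : ℕ} (h : SameMaxSubfields K n A B) (e : A ≃ₐ[K] S) :
    SameMaxSubfields K n S B := fun P _ _ hP ↦
  .trans ⟨fun ⟨f⟩ ↦ ⟨e.symm.toAlgHom.comp f⟩, fun ⟨f⟩ ↦ ⟨e.toAlgHom.comp f⟩⟩ (h P hP)

lemma left_of_tensor {X X₁ X₂ Y Y₁ Y₂ : Type} [DivisionRing X] [Algebra K X]
    [DivisionRing X₁] [Algebra K X₁] [Algebra.IsCentral K X₁] [FiniteDimensional K X₁]
    [DivisionRing X₂] [Algebra K X₂] [Algebra.IsCentral K X₂] [FiniteDimensional K X₂]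
    [DivisionRing Y] [Algebra K Y]
    [DivisionRing Y₁] [Algebra K Y₁] [Algebra.IsCentral K Y₁] [FiniteDimensional K Y₁]
    [DivisionRing Y₂] [Algebra K Y₂] [Algebra.IsCentral K Y₂] [FiniteDimensional K Y₂]
    (h : SameMaxSubfields K (n₁ * n₂) X Y) (hcop : n₁.Coprime n₂)
    (hX₁ : finrank K X₁ = n₁ ^ 2) (hX₂ : finrank K X₂ = n₂ ^ 2)
    (hY₁ : finrank K Y₁ = n₁ ^ 2) (hY₂ : finrank K Y₂ = n₂ ^ 2)
    (eX : X ≃ₐ[K] X₁ ⊗[K] X₂) (eY : Y ≃ₐ[K] Y₁ ⊗[K] Y₂) : SameMaxSubfields K n₁ X₁ Y₁ := by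
  refine fun P _ _ hP ↦ ⟨fun ⟨f⟩ ↦ ?_, fun ⟨f⟩ ↦ ?_⟩ <;>
    have : FiniteDimensional K P := .of_injective f.toLinearMap f.toRingHom.injective
  · exact nonempty_algHom_left_of_forall_algHom eX eY hcop hX₂ hY₁ hY₂
      (fun F _ _ hF ↦ (h F hF).mp) hP f
  · exact nonempty_algHom_left_of_forall_algHom eY eX hcop hY₂ hX₁ hX₂
      (fun F _ _ hF ↦ (h F hF).mpr) hP f

lemma exists_algEquiv_tensor {D D₁ D₂ D' : Type} [DivisionRing D] [Algebra K D]
    [DivisionRing D₁] [Algebra K D₁] [Algebra.IsCentral K D₁] [FiniteDimensional K D₁]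
    [DivisionRing D₂] [Algebra K D₂] [Algebra.IsCentral K D₂] [FiniteDimensional K D₂]
    [DivisionRing D'] [Algebra K D'] [Algebra.IsCentral K D'] [FiniteDimensional K D']
    (h : SameMaxSubfields K (n₁ * n₂) D D') (hcop : n₁.Coprime n₂)
    (hD₁ : finrank K D₁ = n₁ ^ 2) (hD₂ : finrank K D₂ = n₂ ^ 2)
    (hD' : finrank K D' = (n₁ * n₂) ^ 2) (e : D ≃ₐ[K] D₁ ⊗[K] D₂) :
    ∃ (A : Type) (_ : DivisionRing A) (_ : Algebra K A) (_ : Algebra.IsCentral K A)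
      (_ : FiniteDimensional K A) (B : Type) (_ : DivisionRing B) (_ : Algebra K B)
      (_ : Algebra.IsCentral K B) (_ : FiniteDimensional K B),
      finrank K A = n₁ ^ 2 ∧ finrank K B = n₂ ^ 2 ∧ Nonempty (D' ≃ₐ[K] A ⊗[K] B) := by
  obtain ⟨P, _, _, hP, ⟨f⟩⟩ := exists_field_algHom_of_finrank_eq_sq hD₁
  obtain ⟨Q, _, _, hQ, ⟨g⟩⟩ := exists_field_algHom_of_finrank_eq_sq hD₂
  have : FiniteDimensional K P := .of_injective f.toLinearMap f.toRingHom.injective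
  have : FiniteDimensional K Q := .of_injective g.toLinearMap g.toRingHom.injective
  obtain ⟨F, _, _, hF, ⟨i⟩, ⟨j⟩, hFD⟩ := exists_field_of_algEquiv_tensor e f g
  obtain ⟨k⟩ := (h F (by rw [hF, hP, hQ])).mp hFD
  exact exists_algEquiv_tensor_of_coprime hD' hcop hP hQ (k.comp i) (k.comp j)

end SameMaxSubfields

/-- if `D = D₁ ⊗ D₂` is a central division algebra of degree `n = n₁n₂` with
`gcd(n₁,n₂) = 1` and `D'` is a central division algebra of degree `n` with the same maximal
subfields as `D`, then `D' ≅ D'₁ ⊗ D'₂` where `D'ᵢ` is a central division algebra of degree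
`nᵢ` with the same maximal subfields as `Dᵢ`. -/
theorem genus_primary_decomposition (K : Type) [Field K] (n₁ n₂ : ℕ)
    (hn₁ : 0 < n₁) (hn₂ : 0 < n₂) (hcop : Nat.Coprime n₁ n₂)
    (D D₁ D₂ D' : Type)
    [DivisionRing D] [Algebra K D] [DivisionRing D₁] [Algebra K D₁]
    [DivisionRing D₂] [Algebra K D₂] [DivisionRing D'] [Algebra K D']
    (hDc : Subalgebra.center K D = ⊥) (hD₁c : Subalgebra.center K D₁ = ⊥)
    (hD₂c : Subalgebra.center K D₂ = ⊥) (hD'c : Subalgebra.center K D' = ⊥)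
    (hDdeg : Module.finrank K D = (n₁ * n₂) ^ 2)
    (hD₁deg : Module.finrank K D₁ = n₁ ^ 2)
    (hD₂deg : Module.finrank K D₂ = n₂ ^ 2)
    (hD'deg : Module.finrank K D' = (n₁ * n₂) ^ 2)
    (hD : Nonempty (D ≃ₐ[K] (D₁ ⊗[K] D₂)))
    (hsame : SameMaxSubfields K (n₁ * n₂) D D') :
    ∃ (A₁ : Subalgebra K (Matrix (Fin (n₁ ^ 2)) (Fin (n₁ ^ 2)) K))
      (A₂ : Subalgebra K (Matrix (Fin (n₂ ^ 2)) (Fin (n₂ ^ 2)) K)),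
      IsDivisionSubalgebra A₁ ∧ IsDivisionSubalgebra A₂ ∧
      Subalgebra.center K ↥A₁ = ⊥ ∧ Subalgebra.center K ↥A₂ = ⊥ ∧
      Module.finrank K ↥A₁ = n₁ ^ 2 ∧ Module.finrank K ↥A₂ = n₂ ^ 2 ∧
      SameMaxSubfields K n₁ ↥A₁ D₁ ∧ SameMaxSubfields K n₂ ↥A₂ D₂ ∧
      Nonempty (D' ≃ₐ[K] (↥A₁ ⊗[K] ↥A₂)) := by
  have : Algebra.IsCentral K D₁ := ⟨hD₁c.le⟩
  have : Algebra.IsCentral K D₂ := ⟨hD₂c.le⟩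
  have : Algebra.IsCentral K D' := ⟨hD'c.le⟩
  have : FiniteDimensional K D₁ := Module.finite_of_finrank_pos (by rw [hD₁deg]; positivity)
  have : FiniteDimensional K D₂ := Module.finite_of_finrank_pos (by rw [hD₂deg]; positivity)
  have : FiniteDimensional K D' := Module.finite_of_finrank_pos (by rw [hD'deg]; positivity)
  obtain ⟨e⟩ := hD
  obtain ⟨A, _, _, _, _, B, _, _, _, _, hA, hB, ⟨e'⟩⟩ :=
    hsame.exists_algEquiv_tensor hcop hD₁deg hD₂deg hD'deg e
  have sameA : SameMaxSubfields K n₁ A D₁ :=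
    hsame.symm.left_of_tensor hcop hA hB hD₁deg hD₂deg e' e
  have sameB : SameMaxSubfields K n₂ B D₂ :=
    (mul_comm n₁ n₂ ▸ hsame.symm).left_of_tensor hcop.symm hB hA hD₂deg hD₁deg
      (e'.trans (Algebra.TensorProduct.comm K A B)) (e.trans (Algebra.TensorProduct.comm K D₁ D₂))
  obtain ⟨A₁, divA₁, centerA₁, degA₁, ⟨f₁⟩⟩ :=
    CentralSimple.exists_subalgebra_matrix_algEquiv hA
  obtain ⟨A₂, divA₂, centerA₂, degA₂, ⟨f₂⟩⟩ :=
    CentralSimple.exists_subalgebra_matrix_algEquiv hB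
  exact ⟨A₁, A₂, divA₁, divA₂, centerA₁, centerA₂, degA₁, degA₂, sameA.congr_left f₁,
    sameB.congr_left f₂, ⟨e'.trans (Algebra.TensorProduct.congr f₁ f₂)⟩⟩
end

section
/- Let R be a noetherian integrally closed domain with fraction field K, P the set of height-one primes of R, and M an R-lattice in W = K^n. Then: (1) for any other R-lattice N ⊆ W, N_𝔭 = M_𝔭 for all but finitely many 𝔭 ∈ P; (2) given R_𝔭-lattices N(𝔭) ⊆ W for 𝔭 ∈ P with N(𝔭) = M_𝔭 for almost all 𝔭, the intersection N = ∩_{𝔭∈P} N(𝔭) is a reflexive R-lattice with N_𝔭 = N(𝔭) for all 𝔭 ∈ P. -/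
section

variable {R K : Type} [CommRing R] [IsDomain R] [Field K] [Algebra R K] [IsFractionRing R K]
  (n : ℕ)

/-- The set of height-one primes of `R` (minimal nonzero primes). -/
def HtOnePrime (R : Type) [CommRing R] : Type :=
  {p : Ideal R // p.IsPrime ∧ p ≠ ⊥ ∧ ∀ q : Ideal R, q.IsPrime → q < p → q = ⊥}

/-- The localization `R_𝔭 · M ⊆ W` of a subset `M` of `W = K^n` at a height-one prime. -/
def LocAt (p : HtOnePrime R) (M : Set (Fin n → K)) : Set (Fin n → K) :=
  {x | ∃ s : R, s ∉ p.1 ∧ s • x ∈ M}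

/-- An `R`-lattice in `W = K^n`: a finitely generated `R`-submodule containing a `K`-basis. -/
def IsLattice (M : Submodule R (Fin n → K)) : Prop :=
  M.FG ∧ Submodule.span K (M : Set (Fin n → K)) = ⊤

/-- An `R_𝔭`-lattice in `W = K^n`: the localization at `𝔭` of some `R`-lattice. -/
def IsLocLattice (p : HtOnePrime R) (N : Set (Fin n → K)) : Prop :=
  ∃ M : Submodule R (Fin n → K), IsLattice n M ∧ N = LocAt n p (M : Set (Fin n → K))

end

/-!
Write `M_𝔭` for the vectors which some element of `R \ 𝔭` multiplies into `M`. If `a ≠ 0` satisfies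
`a N ⊆ M`, then `N_𝔭 ⊆ M_𝔭` unless `a ∈ 𝔭`, which happens for finitely many `𝔭` only. This gives
(1), and it reduces (2) to `N(𝔭) = (L_𝔭)_𝔭` for lattices `L_𝔭` lying between fixed lattices `B ⊆ A`.

* Finiteness: `A` lies in a free lattice `F`, and `F = ⋂ F_𝔭` because `R = ⋂ R_𝔭`; so `N ⊆ F`.
* Localizations: localizing `N(𝔮)` at `𝔭 ≠ 𝔮` gives the whole space, so the finitely many `𝔮` with
  `A_𝔮 ⊄ B_𝔮` impose no condition on `N_𝔭` unless `𝔮 = 𝔭`; for all other `𝔮`, `A ⊆ N(𝔮)`.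
* Reflexivity: `R_𝔭` is a principal ideal domain, so `N_𝔭` is free and a bidual element of `N`
  becomes evaluation at some vector of `N_𝔭`. Over `K` this vector is unique, so it is the same for
  all `𝔭` and lies in `⋂ N_𝔭 = N`.
-/

open Module nonZeroDivisors

section Localize

variable {R V : Type*} [CommRing R] [AddCommGroup V] [Module R V]

/-- The localization `S⁻¹N` of a submodule `N`, realized inside the ambient module `V`. When `S`
acts bijectively on `V`, as the nonzero elements of a domain do on a vector space over its fraction
field, this is the `S⁻¹R`-submodule generated by `N`; `V` itself is not localized. -/
def localize (S : Submonoid R) (N : Submodule R V) : Submodule R V where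
  carrier := {x | ∃ s ∈ S, s • x ∈ N}
  zero_mem' := ⟨1, S.one_mem, by simp⟩
  add_mem' := by
    rintro x y ⟨s, hs, hx⟩ ⟨t, ht, hy⟩
    refine ⟨s * t, S.mul_mem hs ht, ?_⟩
    rw [smul_add, mul_smul s t y, mul_comm, mul_smul]
    exact N.add_mem (N.smul_mem t hx) (N.smul_mem s hy)
  smul_mem' := by
    rintro r x ⟨s, hs, hx⟩
    exact ⟨s, hs, by rw [smul_comm]; exact N.smul_mem r hx⟩

variable {S T : Submonoid R} {M N : Submodule R V}

lemma le_localize : N ≤ localize S N := fun x hx ↦ ⟨1, S.one_mem, by rwa [one_smul]⟩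

lemma localize_mono (h : M ≤ N) : localize S M ≤ localize S N :=
  fun _ ⟨s, hs, hx⟩ ↦ ⟨s, hs, h hx⟩

lemma localize_top : localize S (⊤ : Submodule R V) = ⊤ := top_le_iff.1 le_localize

lemma localize_localize : localize S (localize T N) = localize (S ⊔ T) N := by
  ext x
  constructor
  · rintro ⟨s, hs, t, ht, hx⟩
    exact ⟨t * s, mul_mem (Submonoid.mem_sup_right ht) (Submonoid.mem_sup_left hs),
      by rwa [mul_smul]⟩
  · rintro ⟨_, hst, hx⟩
    obtain ⟨s, hs, t, ht, rfl⟩ := Submonoid.mem_sup.1 hst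
    exact ⟨s, hs, t, ht, by rwa [smul_smul, mul_comm]⟩

lemma localize_le_localize_iff : localize S M ≤ localize S N ↔ M ≤ localize S N :=
  ⟨le_localize.trans, fun h ↦ (localize_mono h).trans (by rw [localize_localize, sup_idem])⟩

lemma localize_inf : localize S (M ⊓ N) = localize S M ⊓ localize S N := by
  refine le_antisymm (le_inf (localize_mono inf_le_left) (localize_mono inf_le_right)) ?_
  rintro x ⟨⟨s, hs, hxM⟩, t, ht, hxN⟩
  refine ⟨s * t, S.mul_mem hs ht, ?_, ?_⟩
  · rw [mul_comm, mul_smul]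
    exact M.smul_mem t hxM
  · rw [mul_smul]
    exact N.smul_mem s hxN

lemma localize_biInf_of_finite {ι : Type*} {I : Set ι} (hI : I.Finite) (f : ι → Submodule R V) :
    localize S (⨅ i ∈ I, f i) = ⨅ i ∈ I, localize S (f i) := by
  induction I, hI using Set.Finite.induction_on with
  | empty => simp [localize_top]
  | insert _ _ ih => rw [iInf_insert, iInf_insert, localize_inf, ih]

lemma exists_smul_mem_of_fg_of_le_localize (hN : N.FG) (h : N ≤ localize S M) :
    ∃ s ∈ S, ∀ x ∈ N, s • x ∈ M := by
  induction N, hN using Submodule.fg_induction with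
  | singleton x =>
    obtain ⟨s, hs, hx⟩ := h (Submodule.mem_span_singleton_self x)
    refine ⟨s, hs, fun y hy ↦ ?_⟩
    obtain ⟨r, rfl⟩ := Submodule.mem_span_singleton.1 hy
    rw [smul_comm]
    exact M.smul_mem r hx
  | sup N₁ N₂ _ _ ih₁ ih₂ =>
    obtain ⟨s, hs, hN₁⟩ := ih₁ (le_sup_left.trans h)
    obtain ⟨t, ht, hN₂⟩ := ih₂ (le_sup_right.trans h)
    refine ⟨s * t, S.mul_mem hs ht, fun y hy ↦ ?_⟩
    obtain ⟨y₁, hy₁, y₂, hy₂, rfl⟩ := Submodule.mem_sup.1 hy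
    rw [smul_add, mul_smul s t y₂, mul_comm, mul_smul]
    exact M.add_mem (M.smul_mem t (hN₁ y₁ hy₁)) (M.smul_mem s (hN₂ y₂ hy₂))

end Localize

lemma exists_smul_eq_dual_eval {R W : Type*} [CommRing R] [AddCommGroup W] [Module R W]
    [Module.FinitePresentation R W] {S : Submonoid R} (hS : S ≤ R⁰)
    [IsReflexive (Localization S) (LocalizedModule S W)] (φ : Dual R (Dual R W)) :
    ∃ s ∈ S, ∃ w : W, s • φ = Dual.eval R W w := by
  let toLoc := LocalizedModule.mkLinearMap S W
  let algMap := Algebra.linearMap R (Localization S)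
  let dualLoc : Dual R W →ₗ[R] Dual (Localization S) (LocalizedModule S W) :=
    IsLocalizedModule.mapExtendScalars S toLoc algMap (Localization S)
  obtain ⟨z, hz⟩ := (bijective_dual_eval (Localization S) (LocalizedModule S W)).2
    (IsLocalizedModule.mapExtendScalars S dualLoc algMap (Localization S) φ)
  obtain ⟨⟨w, s⟩, hw : s • z = toLoc w⟩ := IsLocalizedModule.surj S toLoc z
  refine ⟨s, s.2, w, ?_⟩
  ext f
  apply IsLocalization.injective (Localization S) hS
  have hf : dualLoc f z = algMap (φ f) := by
    have := congr($hz (dualLoc f))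
    simpa [dualLoc] using this
  calc algMap ((s • φ) f) = s • dualLoc f z := by rw [hf]; simp
    _ = dualLoc f (toLoc w) := by rw [← hw]; exact ((dualLoc f).map_smul_of_tower s z).symm
    _ = algMap (f w) := by
      rw [IsLocalizedModule.mapExtendScalars_apply_apply, IsLocalizedModule.map_apply]

section Lattice

variable {R K V : Type*} [CommRing R] [Field K] [Algebra R K] [AddCommGroup V]
  [Module R V] [Module K V] [IsScalarTower R K V] {M N : Submodule R V}

variable (M) in
lemma finite_of_isLattice [Submodule.IsLattice K M] : Module.Finite K V := by
  obtain ⟨s, hs⟩ := Submodule.IsLattice.fg (M := M)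
  refine ⟨s, ?_⟩
  rw [← Submodule.IsLattice.span_eq_top (M := M), ← hs, Submodule.span_span_of_tower]

variable [IsFractionRing R K]

lemma localize_nonZeroDivisors_eq_top_iff :
    localize R⁰ M = ⊤ ↔ Submodule.span K (M : Set V) = ⊤ := by
  have hmem (x : V) : x ∈ localize R⁰ M ↔ x ∈ Submodule.span K (M : Set V) := by
    simp only [IsLocalization.mem_span_iff R⁰, Submodule.span_eq]
    constructor
    · rintro ⟨s, hs, hx⟩
      refine ⟨s • x, hx, ⟨s, hs⟩, ?_⟩
      rw [← algebraMap_smul K s x, smul_smul, IsLocalization.mk'_spec_mk, map_one, one_smul]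
    · rintro ⟨y, hy, s, rfl⟩
      refine ⟨s, s.2, ?_⟩
      rwa [← algebraMap_smul K (s : R), smul_smul, IsLocalization.mk'_spec', map_one, one_smul]
  simp only [Submodule.eq_top_iff', hmem]

lemma isLattice_inf [IsNoetherianRing R] [Submodule.IsLattice K M] [Submodule.IsLattice K N] :
    Submodule.IsLattice K (M ⊓ N) where
  fg := Submodule.IsLattice.fg.of_le inf_le_left
  span_eq_top := by
    rw [← localize_nonZeroDivisors_eq_top_iff, localize_inf,
      localize_nonZeroDivisors_eq_top_iff.2 Submodule.IsLattice.span_eq_top,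
      localize_nonZeroDivisors_eq_top_iff.2 Submodule.IsLattice.span_eq_top, inf_top_eq]

lemma exists_isLattice_le_le_of_finite [IsNoetherianRing R] {T : Set (Submodule R V)}
    (hT : T.Finite) (hlat : ∀ L ∈ T, Submodule.IsLattice K L) (M : Submodule R V)
    [Submodule.IsLattice K M] :
    ∃ B A : Submodule R V, Submodule.IsLattice K B ∧ Submodule.IsLattice K A ∧
      ∀ L ∈ T, B ≤ L ∧ L ≤ A := by
  induction T, hT using Set.Finite.induction_on with
  | empty => exact ⟨M, M, ‹_›, ‹_›, by simp⟩
  | @insert L T _ _ ih =>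
    obtain ⟨hL, hlat⟩ := Set.forall_mem_insert.1 hlat
    obtain ⟨B, A, hB, hA, hBA⟩ := ih hlat
    refine ⟨L ⊓ B, L ⊔ A, isLattice_inf, inferInstance, Set.forall_mem_insert.2 ⟨?_, ?_⟩⟩
    · exact ⟨inf_le_left, le_sup_left⟩
    · exact fun L' hL' ↦ ⟨inf_le_right.trans (hBA L' hL').1, (hBA L' hL').2.trans le_sup_right⟩

lemma exists_basis_le_span [IsDomain R] [FiniteDimensional K V] (hM : M.FG) :
    ∃ b : Basis (Fin (finrank K V)) K V, M ≤ Submodule.span R (Set.range b) := by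
  let c := finBasis K V
  have htop : localize R⁰ (Submodule.span R (Set.range c)) = ⊤ := by
    rw [localize_nonZeroDivisors_eq_top_iff (K := K), Submodule.span_span_of_tower, c.span_eq]
  obtain ⟨s, hs, hsM⟩ := exists_smul_mem_of_fg_of_le_localize hM (htop ▸ le_top)
  have hs0 : algebraMap R K s ≠ 0 :=
    IsLocalization.to_map_ne_zero_of_mem_nonZeroDivisors K le_rfl hs
  refine ⟨c.unitsSMul fun _ ↦ (Units.mk0 _ hs0)⁻¹, fun x hx ↦ ?_⟩
  rw [Basis.mem_span_iff_repr_mem]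
  intro i
  have hi := (c.mem_span_iff_repr_mem R (s • x)).1 (hsM x hx) i
  rw [← algebraMap_smul K s x, map_smul] at hi
  simpa [Basis.repr_unitsSMul, Algebra.smul_def] using hi

variable (K) in
lemma dual_eval_injective_of_fg [IsDomain R] [FiniteDimensional K V] (hN : N.FG) :
    Function.Injective (Dual.eval R N) := by
  obtain ⟨b, hb⟩ := exists_basis_le_span (K := K) hN
  refine (injective_iff_map_eq_zero _).2 fun x hx ↦ Subtype.ext ?_
  let ι := Submodule.inclusion hb
  suffices h : ι x = 0 from congr($h)
  refine (b.restrictScalars R).ext_elem fun i ↦ ?_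
  simpa using congr($hx ((b.restrictScalars R).coord i ∘ₗ ι))

variable (K) in
theorem isReflexive_of_isReflexive_localizedModule [IsDomain R] [IsNoetherianRing R]
    [FiniteDimensional K V] (hN : N.FG) {ι : Type*} {S : ι → Submonoid R} (hS : ∀ i, S i ≤ R⁰)
    (hrefl : ∀ i, IsReflexive (Localization (S i)) (LocalizedModule (S i) N))
    (hle : ⨅ i, localize (S i) N ≤ N) : IsReflexive R N := by
  have : Module.Finite R N := Module.Finite.iff_fg.2 hN
  have : FinitePresentation R N := finitePresentation_of_finite R N
  have : IsTorsionFree R V := IsTorsionFree.trans_faithfulSMul R K V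
  have hinj := dual_eval_injective_of_fg K hN
  refine ⟨hinj, fun φ ↦ ?_⟩
  obtain ⟨a, ha, y, hy⟩ := exists_smul_eq_dual_eval (S := R⁰) le_rfl φ
  let x : V := IsLocalization.mk' K 1 ⟨a, ha⟩ • (y : V)
  have hx : a • x = y := by
    rw [← algebraMap_smul K a, smul_smul, IsLocalization.mk'_spec'_mk, map_one, one_smul]
  have hxN : x ∈ N := by
    refine hle (Submodule.mem_iInf _ |>.2 fun i ↦ ?_)
    obtain ⟨s, hs, z, hz⟩ := exists_smul_eq_dual_eval (hS i) φ
    have hyz : s • y = a • z := hinj (by rw [map_smul, map_smul, ← hy, ← hz, smul_comm])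
    have hxz : s • x = z := by
      apply smul_right_injective V (nonZeroDivisors.ne_zero ha)
      simpa only [smul_comm a s x, hx, Submodule.coe_smul] using congr(($hyz : V))
    exact ⟨s, hs, hxz ▸ z.2⟩
  refine ⟨⟨x, hxN⟩, smul_right_injective _ (nonZeroDivisors.ne_zero ha) ?_⟩
  have hxy : a • ⟨x, hxN⟩ = y := Subtype.ext hx
  simp only [hy, ← map_smul, hxy]

end Lattice

section IntegrallyClosed

lemma mem_bot_colon_singleton_mk {R V : Type*} [CommRing R] [AddCommGroup V] [Module R V]
    {N : Submodule R V} {x : V} {s : R} :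
    s ∈ (⊥ : Submodule R (V ⧸ N)).colon {Submodule.Quotient.mk x} ↔ s • x ∈ N := by
  rw [Submodule.mem_colon_singleton, Submodule.mem_bot, ← Submodule.Quotient.mk_smul,
    Submodule.Quotient.mk_eq_zero]

variable {R K : Type*} [CommRing R] [IsNoetherianRing R] [IsIntegrallyClosed R]
  [Field K] [Algebra R K] [IsFractionRing R K]

lemma exists_notMem_algebraMap_eq_smul {I : Ideal R} (hI : I ≠ ⊥) {y : K}
    (hy : y ∉ (1 : Submodule R K)) (hIy : ∀ s ∈ I, s • y ∈ (1 : Submodule R K)) :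
    ∃ t ∈ I, ∃ u ∉ I, algebraMap R K u = t • y := by
  by_contra! hmaps
  refine hy (Submodule.mem_one.2 (IsIntegrallyClosed.isIntegral_iff.1 ?_))
  refine isIntegral_of_smul_mem_submodule (Submodule.map (Algebra.linearMap R K) I) ?_ ?_ y ?_
  · rwa [← Submodule.map_bot (Algebra.linearMap R K),
      (Submodule.map_injective_of_injective (IsFractionRing.injective R K)).ne_iff]
  · exact (IsNoetherian.noetherian I).map _
  · rintro _ ⟨t, ht, rfl⟩
    obtain ⟨u, hu⟩ := Submodule.mem_one.1 (hIy t ht)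
    refine ⟨u, by_contra fun huI ↦ hmaps t ht u huI hu, ?_⟩
    rw [Algebra.linearMap_apply, Algebra.linearMap_apply, hu, Algebra.smul_def, smul_eq_mul,
      mul_comm]

variable [IsDomain R]

lemma height_eq_one_of_isAssociatedPrime {p : Ideal R}
    (hp : IsAssociatedPrime p (K ⧸ (1 : Submodule R K))) : p.height = 1 := by
  obtain ⟨hprime, y, hy⟩ := isAssociatedPrime_iff.1 hp
  obtain ⟨y, rfl⟩ := Submodule.Quotient.mk_surjective _ y
  have hmem (s : R) : s ∈ p ↔ s • y ∈ (1 : Submodule R K) := by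
    rw [hy, mem_bot_colon_singleton_mk]
  have hbot : p ≠ ⊥ := by
    obtain ⟨⟨r, s⟩, hrs⟩ := IsLocalization.surj R⁰ y
    refine Submodule.ne_bot_iff _ |>.2 ⟨s, (hmem s).2 (Submodule.mem_one.2 ⟨r, ?_⟩), by simp⟩
    rw [← hrs, Algebra.smul_def, mul_comm]
  have hy1 : y ∉ (1 : Submodule R K) := by
    rw [← one_smul R y, ← hmem]
    exact p.one_notMem
  obtain ⟨t, ht, u, hu, htu⟩ := exists_notMem_algebraMap_eq_smul hbot hy1 fun s ↦ (hmem s).1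
  have hmin : p ∈ (Ideal.span {t}).minimalPrimes := by
    refine ⟨⟨hprime, (Ideal.span_singleton_le_iff_mem _).2 ht⟩, fun q ⟨hq, htq⟩ hqp z hz ↦ ?_⟩
    obtain ⟨v, hv⟩ := Submodule.mem_one.1 ((hmem z).1 hz)
    have huz : u * z = v * t := by
      apply IsFractionRing.injective R K
      simp only [map_mul, htu, hv, Algebra.smul_def]
      ring
    refine (hq.mem_or_mem (?_ : u * z ∈ q)).resolve_left fun h ↦ hu (hqp h)
    rw [huz]
    exact q.mul_mem_left _ ((Ideal.span_singleton_le_iff_mem _).1 htq)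
  refine le_antisymm (Ideal.height_le_one_of_isPrincipal_of_mem_minimalPrimes _ _ hmin) ?_
  exact Order.one_le_iff_ne_zero.2 (mt Ideal.height_eq_zero_iff_eq_bot.1 hbot)

lemma mem_one_of_forall_mem_localize {x : K}
    (hx : ∀ (p : Ideal R) [p.IsPrime], p.height = 1 → x ∈ localize p.primeCompl 1) :
    x ∈ (1 : Submodule R K) := by
  by_contra hx1
  obtain ⟨p, hp, hle⟩ := exists_le_isAssociatedPrime_of_isNoetherianRing R
    (Submodule.Quotient.mk x : K ⧸ (1 : Submodule R K)) (by simpa using hx1)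
  have := hp.isPrime
  obtain ⟨s, hs, hsx⟩ := hx p (height_eq_one_of_isAssociatedPrime hp)
  refine hs (hle ?_)
  rwa [mem_bot_colon_singleton_mk]

lemma mem_span_of_forall_mem_localize {V ι : Type*} [AddCommGroup V] [Module R V] [Module K V]
    [IsScalarTower R K V] (b : Basis ι K V) {x : V}
    (hx : ∀ (p : Ideal R) [p.IsPrime], p.height = 1 →
      x ∈ localize p.primeCompl (Submodule.span R (Set.range b))) :
    x ∈ Submodule.span R (Set.range b) := by
  refine (b.mem_span_iff_repr_mem R x).2 fun i ↦ ?_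
  refine Submodule.mem_one.1 (mem_one_of_forall_mem_localize fun p _ hp ↦ ?_)
  obtain ⟨s, hs, hsx⟩ := hx p hp
  refine ⟨s, hs, ?_⟩
  have hi := (b.mem_span_iff_repr_mem R _).1 hsx i
  rw [← algebraMap_smul K s x, map_smul] at hi
  exact Submodule.mem_one.2 (by rwa [Algebra.smul_def])

lemma isPrincipalIdealRing_localization_atPrime (p : Ideal R) [p.IsPrime] (hp : p.height ≤ 1) :
    IsPrincipalIdealRing (Localization.AtPrime p) := by
  have : IsNoetherianRing (Localization.AtPrime p) :=
    IsLocalization.isNoetherianRing p.primeCompl _ inferInstance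
  have : IsIntegrallyClosed (Localization.AtPrime p) :=
    isIntegrallyClosed_of_isLocalization _ p.primeCompl p.primeCompl_le_nonZeroDivisors
  have htfae := tfae_of_isNoetherianRing_of_isLocalRing_of_isDomain (Localization.AtPrime p)
  refine (htfae.out 0 3 :).2 ⟨this, fun q hq hqprime ↦ ?_⟩
  refine Ideal.eq_of_le_of_height_le _ (IsLocalRing.le_maximalIdeal hqprime.ne_top) ?_
  have hmax : (IsLocalRing.maximalIdeal (Localization.AtPrime p)).height ≤ 1 := by
    rw [← WithBot.coe_le_coe, IsLocalRing.maximalIdeal_height_eq_ringKrullDim,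
      IsLocalization.AtPrime.ringKrullDim_eq_height p]
    exact_mod_cast hp
  exact hmax.trans (Order.one_le_iff_ne_zero.2 (mt Ideal.height_eq_zero_iff_eq_bot.1 hq))

end IntegrallyClosed

lemma exists_mul_mem_primeCompl_sup_primeCompl {R : Type*} [CommRing R] {p q : Ideal R}
    [p.IsPrime] [q.IsPrime] (hpq : ∀ P : Ideal R, P.IsPrime → P ≤ p → P ≤ q → P = ⊥)
    {a : R} (ha : a ≠ 0) : ∃ c, c * a ∈ p.primeCompl ⊔ q.primeCompl := by
  by_contra! h
  have hdisj : Disjoint (Ideal.span {a} : Set R) ↑(p.primeCompl ⊔ q.primeCompl) := by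
    rw [Set.disjoint_left]
    intro x hx
    obtain ⟨c, rfl⟩ := Ideal.mem_span_singleton'.1 hx
    exact h c
  obtain ⟨P, hP, haP, hdisj⟩ := Ideal.exists_le_prime_disjoint _ _ hdisj
  rw [Set.disjoint_left] at hdisj
  have hPp : P ≤ p := fun x hx ↦ not_not.1 fun hxp ↦ hdisj hx (Submonoid.mem_sup_left hxp)
  have hPq : P ≤ q := fun x hx ↦ not_not.1 fun hxq ↦ hdisj hx (Submonoid.mem_sup_right hxq)
  have haP := (Ideal.span_singleton_le_iff_mem P).1 haP
  exact ha (by simpa [hpq P hP hPp hPq] using haP)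

namespace HtOnePrime

section Ideal

variable {R : Type} [CommRing R]

instance (p : HtOnePrime R) : p.1.IsPrime := p.2.1

/-- The multiplicative set `R \ p`, so that `localize p.primeCompl M` is the paper's `M_𝔭`. -/
def primeCompl (p : HtOnePrime R) : Submonoid R := p.1.primeCompl

lemma finite_setOf_mem [IsNoetherianRing R] {a : R} (ha : a ≠ 0) :
    {p : HtOnePrime R | a ∈ p.1}.Finite := by
  refine ((Ideal.span {a}).finite_minimalPrimes_of_isNoetherianRing R |>.preimage
    Subtype.val_injective.injOn).subset fun p hp ↦ ?_
  refine ⟨⟨p.2.1, (Ideal.span_singleton_le_iff_mem _).2 hp⟩, fun q ⟨hq, haq⟩ hqp ↦ ?_⟩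
  refine (hqp.eq_or_lt.resolve_right fun hlt ↦ ha ?_).ge
  simpa [p.2.2.2 q hq hlt] using (Ideal.span_singleton_le_iff_mem q).1 haq

lemma eq_bot_of_le_of_le {p q : HtOnePrime R} (hpq : p ≠ q) {P : Ideal R} (hP : P.IsPrime)
    (hPp : P ≤ p.1) (hPq : P ≤ q.1) : P = ⊥ := by
  rcases hPp.lt_or_eq with hlt | rfl
  · exact p.2.2.2 P hP hlt
  · exact q.2.2.2 _ hP (hPq.lt_of_ne fun h ↦ hpq (Subtype.ext h))

variable [IsDomain R]

lemma height_eq_one (p : HtOnePrime R) : p.1.height = 1 := by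
  refine le_antisymm (Ideal.height_le_iff.2 fun q hq hqp ↦ ?_) ?_
  · simp [p.2.2.2 q hq hqp]
  · exact Order.one_le_iff_ne_zero.2 (mt Ideal.height_eq_zero_iff_eq_bot.1 p.2.2.1)

lemma exists_coe_eq {p : Ideal R} [p.IsPrime] (hp : p.height = 1) :
    ∃ P : HtOnePrime R, P.1 = p := by
  refine ⟨⟨p, ‹_›, Ideal.ne_bot_of_height_eq_one hp, fun q hq hqp ↦ ?_⟩, rfl⟩
  rw [← Ideal.height_eq_zero_iff_eq_bot, ← Order.lt_one_iff]
  exact Ideal.height_le_iff.1 hp.le q hq hqp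

end Ideal

variable {R : Type} {K V : Type*} [CommRing R] [Field K] [Algebra R K]
  [IsFractionRing R K] [AddCommGroup V] [Module R V] [Module K V] [IsScalarTower R K V]

variable {A B M N : Submodule R V} {L : HtOnePrime R → Submodule R V}

lemma exists_bounded_localize_eq [IsNoetherianRing R] (hM : Submodule.IsLattice K M)
    (hL : ∀ p, Submodule.IsLattice K (L p))
    (hfin : {p | localize p.primeCompl (L p) ≠ localize p.primeCompl M}.Finite) :
    ∃ (B A : Submodule R V) (L' : HtOnePrime R → Submodule R V),
      Submodule.IsLattice K B ∧ Submodule.IsLattice K A ∧ (∀ p, B ≤ L' p ∧ L' p ≤ A) ∧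
      ∀ p, localize p.primeCompl (L' p) = localize p.primeCompl (L p) := by
  classical
  set E := {p | localize p.primeCompl (L p) ≠ localize p.primeCompl M}
  obtain ⟨B, A, hB, hA, hBA⟩ := exists_isLattice_le_le_of_finite (K := K)
    ((hfin.image L).insert M)
    (Set.forall_mem_insert.2 ⟨hM, Set.forall_mem_image.2 fun p _ ↦ hL p⟩) M
  refine ⟨B, A, fun p ↦ if p ∈ E then L p else M, hB, hA, fun p ↦ hBA _ ?_, fun p ↦ ?_⟩
  · dsimp only
    split_ifs with hp
    exacts [Set.mem_insert_of_mem _ (Set.mem_image_of_mem L hp), Set.mem_insert M _]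
  · dsimp only
    split_ifs with hp
    exacts [rfl, (not_not.1 hp).symm]

variable [IsDomain R]

lemma localize_sup_eq_top {p q : HtOnePrime R} (hpq : p ≠ q) {L : Submodule R V}
    (hL : Submodule.span K (L : Set V) = ⊤) :
    localize (p.primeCompl ⊔ q.primeCompl) L = ⊤ := by
  refine top_le_iff.1 fun x _ ↦ ?_
  obtain ⟨a, ha, hax⟩ : x ∈ localize R⁰ L := by
    rw [localize_nonZeroDivisors_eq_top_iff.2 hL]
    trivial
  obtain ⟨c, hc⟩ := exists_mul_mem_primeCompl_sup_primeCompl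
    (fun P ↦ eq_bot_of_le_of_le hpq) (nonZeroDivisors.ne_zero ha)
  exact ⟨c * a, hc, by rw [mul_smul]; exact L.smul_mem c hax⟩

variable [IsNoetherianRing R]

lemma finite_setOf_not_localize_le (hN : N.FG) (hM : Submodule.span K (M : Set V) = ⊤) :
    {p : HtOnePrime R | ¬ localize p.primeCompl N ≤ localize p.primeCompl M}.Finite := by
  have htop : localize R⁰ M = ⊤ := localize_nonZeroDivisors_eq_top_iff.2 hM
  obtain ⟨a, ha, haN⟩ := exists_smul_mem_of_fg_of_le_localize hN (htop ▸ le_top)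
  refine (finite_setOf_mem (nonZeroDivisors.ne_zero ha)).subset fun p hp ↦ ?_
  by_contra hap
  exact hp (localize_le_localize_iff.2 fun x hx ↦ ⟨a, hap, haN x hx⟩)

lemma localize_iInf_localize (hA : A.FG) (hB : Submodule.span K (B : Set V) = ⊤)
    (hBL : ∀ p, B ≤ L p) (hLA : ∀ p, L p ≤ A) (p : HtOnePrime R) :
    localize p.primeCompl (⨅ q : HtOnePrime R, localize q.primeCompl (L q)) =
      localize p.primeCompl (L p) := by
  refine le_antisymm (localize_le_localize_iff.2 (iInf_le _ p))
    (localize_le_localize_iff.2 fun x hx ↦ ?_)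
  let T := {q : HtOnePrime R | ¬ localize q.primeCompl A ≤ localize q.primeCompl B}
  have hT : T.Finite := finite_setOf_not_localize_le hA hB
  have hxT : x ∈ localize p.primeCompl (⨅ q ∈ T, localize q.primeCompl (L q)) := by
    simp only [localize_biInf_of_finite hT, Submodule.mem_iInf]
    intro q _
    rcases eq_or_ne p q with rfl | hpq
    · exact le_localize (le_localize hx)
    · rw [localize_localize, localize_sup_eq_top hpq
        (top_le_iff.1 (hB.ge.trans (Submodule.span_mono (hBL q))))]
      trivial
  obtain ⟨s, hs, hsx⟩ := hxT
  refine ⟨s, hs, (Submodule.mem_iInf _).2 fun q ↦ ?_⟩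
  by_cases hq : q ∈ T
  · exact (Submodule.mem_iInf _).1 ((Submodule.mem_iInf _).1 hsx q) hq
  · exact localize_mono (hBL q) (not_not.1 hq (le_localize (hLA p ((L p).smul_mem s hx))))

variable [IsIntegrallyClosed R]

lemma isLattice_iInf_localize [FiniteDimensional K V] (hA : A.FG)
    (hB : Submodule.span K (B : Set V) = ⊤) (hBL : ∀ p, B ≤ L p) (hLA : ∀ p, L p ≤ A) :
    Submodule.IsLattice K (⨅ p : HtOnePrime R, localize p.primeCompl (L p)) where
  fg := by
    obtain ⟨b, hb⟩ := exists_basis_le_span (K := K) hA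
    refine (Submodule.fg_span (Set.finite_range b)).of_le fun x hx ↦ ?_
    refine mem_span_of_forall_mem_localize b fun p _ hp ↦ ?_
    obtain ⟨p, rfl⟩ := exists_coe_eq hp
    exact localize_mono ((hLA p).trans hb) ((Submodule.mem_iInf _).1 hx p)
  span_eq_top := top_le_iff.1 <| hB.ge.trans <|
    Submodule.span_mono (le_iInf (fun p ↦ (hBL p).trans le_localize) : B ≤ _)

variable (K) in
lemma isReflexive_of_iInf_localize_le [FiniteDimensional K V] (hN : N.FG)
    (hle : ⨅ p : HtOnePrime R, localize p.primeCompl N ≤ N) : IsReflexive R N := by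
  have : Module.Finite R N := Module.Finite.iff_fg.2 hN
  have : IsTorsionFree R V := IsTorsionFree.trans_faithfulSMul R K V
  refine isReflexive_of_isReflexive_localizedModule K hN (S := primeCompl)
    (fun p ↦ p.1.primeCompl_le_nonZeroDivisors) (fun p ↦ ?_) hle
  have : IsDomain (Localization p.primeCompl) :=
    IsLocalization.isDomain_localization p.1.primeCompl_le_nonZeroDivisors
  have : IsPrincipalIdealRing (Localization p.primeCompl) :=
    isPrincipalIdealRing_localization_atPrime p.1 p.height_eq_one.le
  infer_instance

end HtOnePrime

theorem lattice_localizations_general {R : Type} {K V : Type*} [CommRing R] [IsDomain R]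
    [IsNoetherianRing R] [IsIntegrallyClosed R] [Field K] [Algebra R K] [IsFractionRing R K]
    [AddCommGroup V] [Module R V] [Module K V] [IsScalarTower R K V] {M : Submodule R V}
    (hM : Submodule.IsLattice K M) :
    (∀ N : Submodule R V, Submodule.IsLattice K N →
      {p : HtOnePrime R | localize p.primeCompl N ≠ localize p.primeCompl M}.Finite) ∧
    ∀ L : HtOnePrime R → Submodule R V, (∀ p, Submodule.IsLattice K (L p)) →
      {p | localize p.primeCompl (L p) ≠ localize p.primeCompl M}.Finite →
      Submodule.IsLattice K (⨅ p : HtOnePrime R, localize p.primeCompl (L p)) ∧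
      IsReflexive R ↥(⨅ p : HtOnePrime R, localize p.primeCompl (L p)) ∧
      ∀ p : HtOnePrime R, localize p.primeCompl
        (⨅ q : HtOnePrime R, localize q.primeCompl (L q)) = localize p.primeCompl (L p) := by
  have : FiniteDimensional K V := finite_of_isLattice M
  refine ⟨fun N hN ↦ ?_, fun L hL hfin ↦ ?_⟩
  · refine ((HtOnePrime.finite_setOf_not_localize_le hN.fg hM.span_eq_top).union
      (HtOnePrime.finite_setOf_not_localize_le hM.fg hN.span_eq_top)).subset fun p hp ↦ ?_
    exact not_and_or.1 fun h ↦ hp (le_antisymm h.1 h.2)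
  · obtain ⟨B, A, L', hB, hA, hBLA, hL'⟩ := HtOnePrime.exists_bounded_localize_eq hM hL hfin
    have hlat := HtOnePrime.isLattice_iInf_localize hA.fg hB.span_eq_top
      (fun p ↦ (hBLA p).1) (fun p ↦ (hBLA p).2)
    have hloc := HtOnePrime.localize_iInf_localize hA.fg hB.span_eq_top
      (fun p ↦ (hBLA p).1) (fun p ↦ (hBLA p).2)
    rw [← iInf_congr hL']
    refine ⟨hlat, HtOnePrime.isReflexive_of_iInf_localize_le K hlat.fg ?_,
      fun p ↦ (hloc p).trans (hL' p)⟩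
    exact (iInf_congr hloc).le

/-- Theorem 6.3, Bourbaki: let `R` be a noetherian integrally closed domain
with fraction field `K`, `P` its set of height-one primes, and `M` an `R`-lattice in
`W = K^n`.  Then (1) for any other `R`-lattice `N ⊆ W`, `N_𝔭 = M_𝔭` for all but finitely many
`𝔭 ∈ P`; and (2) given `R_𝔭`-lattices `N(𝔭) ⊆ W` with `N(𝔭) = M_𝔭` for almost all `𝔭`, the
intersection `N = ∩_𝔭 N(𝔭)` is a reflexive `R`-lattice with `N_𝔭 = N(𝔭)` for all `𝔭`. -/
theorem lattice_localizations (R K : Type) [CommRing R] [IsDomain R] [IsNoetherianRing R]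
    [IsIntegrallyClosed R] [Field K] [Algebra R K] [IsFractionRing R K]
    (n : ℕ) (M : Submodule R (Fin n → K)) (hM : IsLattice n M) :
    (∀ N : Submodule R (Fin n → K), IsLattice n N →
      {p : HtOnePrime R |
        LocAt n p (N : Set (Fin n → K)) ≠ LocAt n p (M : Set (Fin n → K))}.Finite) ∧
    (∀ 𝒩 : HtOnePrime R → Set (Fin n → K),
      (∀ p, IsLocLattice n p (𝒩 p)) →
      {p : HtOnePrime R | 𝒩 p ≠ LocAt n p (M : Set (Fin n → K))}.Finite →
      ∃ N : Submodule R (Fin n → K),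
        (N : Set (Fin n → K)) = ⋂ p : HtOnePrime R, 𝒩 p ∧
        IsLattice n N ∧
        Module.IsReflexive R ↥N ∧
        ∀ p : HtOnePrime R, LocAt n p (N : Set (Fin n → K)) = 𝒩 p) := by
  have hcoe (p : HtOnePrime R) (N : Submodule R (Fin n → K)) :
      LocAt n p (N : Set (Fin n → K)) = localize p.primeCompl N := rfl
  simp only [hcoe, ne_eq, SetLike.coe_set_eq]
  obtain ⟨hfin, hinter⟩ := lattice_localizations_general ⟨hM.1, hM.2⟩
  refine ⟨fun N hN ↦ hfin N ⟨hN.1, hN.2⟩, fun 𝒩 h𝒩 hne ↦ ?_⟩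
  choose L hL h𝒩 using h𝒩
  obtain rfl : 𝒩 = fun p ↦ ↑(localize p.primeCompl (L p)) := funext h𝒩
  simp only [SetLike.coe_set_eq] at hne ⊢
  obtain ⟨hlat, hrefl, hloc⟩ := hinter L (fun p ↦ ⟨(hL p).1, (hL p).2⟩) hne
  exact ⟨_, Submodule.coe_iInf _, ⟨hlat.fg, hlat.span_eq_top⟩, hrefl, hloc⟩
end
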